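/- arXiv:1905.07759 — 2 statements merged into one kernel-verified Lean document; each statement's English description precedes it below -/
import Mathlib

section
/- For N ≥ 2 and 1 < q ≤ N/(N-1), the best constant E_q := sup over nonzero u in BV(ℝ^N) of ‖u‖_q^q / (‖u‖_1^{q-(q-1)N} ‖u‖_{TV}^{(q-1)N}) equals (1/(N^{N-1} ω_{N-1}))^{q-1}, where ω_{N-1} is the surface area of the unit sphere in ℝ^N. -/
open MeasureTheory Real Filter Topology

noncomputable section

abbrev Euc (N : ℕ) := EuclideanSpace ℝ (Fin N)

/-- The set of values `∫ u div ψ` over admissible test vector fields. -/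
def TVSet (N : ℕ) (u : Euc N → ℝ) : Set ℝ :=
  { r | ∃ ψ : Euc N → Euc N, ContDiff ℝ 1 ψ ∧ HasCompactSupport ψ ∧
      (∀ x, ‖ψ x‖ ≤ 1) ∧
      r = ∫ x, u x * (∑ i, fderiv ℝ (fun y => ψ y i) x (EuclideanSpace.single i 1)) }

/-- Total variation of `u`. -/
def tv (N : ℕ) (u : Euc N → ℝ) : ℝ := sSup (TVSet N u)

/-- `u` is a function of bounded variation on `ℝ^N`. -/
def MemBV (N : ℕ) (u : Euc N → ℝ) : Prop :=
  Integrable u ∧ BddAbove (TVSet N u)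

/-- The `L¹` norm. -/
def nrm1 (N : ℕ) (u : Euc N → ℝ) : ℝ := (eLpNorm u 1 volume).toReal

/-- The `L^q` norm, `q` a real exponent. -/
def nrmq (N : ℕ) (q : ℝ) (u : Euc N → ℝ) : ℝ :=
  (eLpNorm u (ENNReal.ofReal q) volume).toReal

/-- Surface area `ω_{N-1}` of the unit sphere in `ℝ^N`, as `N` times the
volume of the unit ball. -/
def omegaS (N : ℕ) : ℝ := N * (volume (Metric.ball (0 : Euc N) 1)).toReal

/-- The Gagliardo–Nirenberg ratio `‖u‖_q^q / (‖u‖_1^{q-(q-1)N} ‖u‖_{TV}^{(q-1)N})`. -/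
def ratioQ (N : ℕ) (q : ℝ) (u : Euc N → ℝ) : ℝ :=
  nrmq N q u ^ q / (nrm1 N u ^ (q - (q-1)*N) * tv N u ^ ((q-1)*(N:ℝ)))

/-- The best constant `E_q` on `BV(ℝ^N)`. -/
def EqSup (N : ℕ) (q : ℝ) : ℝ :=
  sSup { r | ∃ u : Euc N → ℝ, MemBV N u ∧ u ≠ 0 ∧ r = ratioQ N q u }

/-!
The Prékopa–Leindler inequality on the line passes to products and linear images, so it holds in
every dimension and yields the Brunn–Minkowski inequality. Comparing a set with its small
thickenings, Brunn–Minkowski gives an isoperimetric inequality; applied to the superlevel sets of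
`‖v‖` and integrated over the levels it gives Maz'ya's inequality
`N |B|^{1/N} ‖v‖_{N/(N-1)} ≤ ‖∇v‖₁` for smooth `v`. Mollification and cutoffs do not increase the
total variation in the limit, so the inequality extends to BV. Hölder interpolation between `L¹`
and `L^{N/(N-1)}` then bounds the quotient, and the unit ball attains the bound because its
perimeter is at most its Minkowski content `N |B|`.
-/

open scoped ENNReal NNReal Pointwise Convolution

section PrekopaLeindler

lemma rpow_mul_rpow_le_ofReal_mul_add {a b : ℝ} (ha : 0 < a) (hb : 0 < b) (hab : a + b = 1)
    (x y : ℝ≥0∞) : x ^ a * y ^ b ≤ ENNReal.ofReal a * x + ENNReal.ofReal b * y := by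
  rcases eq_or_ne x ⊤ with rfl | hx
  · simp [ENNReal.mul_top, ha]
  rcases eq_or_ne y ⊤ with rfl | hy
  · simp [ENNReal.mul_top, hb]
  lift x to ℝ≥0 using hx
  lift y to ℝ≥0 using hy
  have weights : a.toNNReal + b.toNNReal = 1 := by
    rw [← Real.toNNReal_add ha.le hb.le, hab, Real.toNNReal_one]
  have amGm := NNReal.geom_mean_le_arith_mean2_weighted a.toNNReal b.toNNReal x y weights
  rw [Real.coe_toNNReal _ ha.le, Real.coe_toNNReal _ hb.le] at amGm
  rw [← ENNReal.coe_rpow_of_nonneg _ ha.le, ← ENNReal.coe_rpow_of_nonneg _ hb.le,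
    ENNReal.ofReal, ENNReal.ofReal]
  exact_mod_cast amGm

lemma measure_le_measure_add_of_nonempty {E : Type*} [AddGroup E] [MeasurableSpace E]
    (μ : Measure E) [μ.IsAddLeftInvariant] {A : Set E} (hA : A.Nonempty) (B : Set E) :
    μ B ≤ μ (A + B) := by
  obtain ⟨a, ha⟩ := hA
  rw [← measure_vadd μ a B]
  exact measure_mono (Set.vadd_set_subset_iff.2 fun y hy => Set.add_mem_add ha hy)

lemma volume_add_volume_le_of_isCompact {K L : Set ℝ} (hK : IsCompact K) (hL : IsCompact L)
    (hK₀ : K.Nonempty) (hL₀ : L.Nonempty) : volume K + volume L ≤ volume (K + L) := by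
  obtain ⟨k, hk, k_max⟩ := hK.exists_isGreatest hK₀
  obtain ⟨l, hl, l_min⟩ := hL.exists_isLeast hL₀
  have disjoint : AEDisjoint volume (l +ᵥ K) (k +ᵥ L) := by
    refine measure_mono_null (t := {k + l}) ?_ (by simp)
    rintro _ ⟨⟨x, hx, rfl⟩, ⟨y, hy, hxy⟩⟩
    have hxk := k_max hx
    have hly := l_min hy
    simp only [vadd_eq_add, Set.mem_singleton_iff] at hxy ⊢
    linarith
  have union_subset : (l +ᵥ K) ∪ (k +ᵥ L) ⊆ K + L := by
    rintro _ (⟨x, hx, rfl⟩ | ⟨y, hy, rfl⟩)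
    · exact ⟨x, hx, l, hl, add_comm _ _⟩
    · exact ⟨k, hk, y, hy, rfl⟩
  calc volume K + volume L = volume (l +ᵥ K) + volume (k +ᵥ L) := by simp only [measure_vadd]
    _ = volume ((l +ᵥ K) ∪ (k +ᵥ L)) :=
      (measure_union₀ (hL.measurableSet.const_vadd k).nullMeasurableSet disjoint).symm
    _ ≤ volume (K + L) := measure_mono union_subset

lemma volume_add_volume_le {A B : Set ℝ} (hA : MeasurableSet A) (hB : MeasurableSet B)
    (hA₀ : A.Nonempty) (hB₀ : B.Nonempty) : volume A + volume B ≤ volume (A + B) := by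
  obtain ⟨x, hx⟩ := hA₀
  obtain ⟨y, hy⟩ := hB₀
  rw [hA.measure_eq_iSup_isCompact, hB.measure_eq_iSup_isCompact]
  simp only [iSup_and']
  refine ENNReal.biSup_add_biSup_le' ⟨∅, by simp⟩ ⟨∅, by simp⟩ ?_
  rintro K ⟨hK, K_compact⟩ L ⟨hL, L_compact⟩
  calc volume K + volume L ≤ volume (insert x K) + volume (insert y L) := by
        gcongr <;> exact Set.subset_insert _ _
    _ ≤ volume (insert x K + insert y L) :=
      volume_add_volume_le_of_isCompact (K_compact.insert x) (L_compact.insert y)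
        (Set.insert_nonempty _ _) (Set.insert_nonempty _ _)
    _ ≤ volume (A + B) :=
      measure_mono (Set.add_subset_add (Set.insert_subset hx hK) (Set.insert_subset hy hL))

lemma lintegral_eq_lintegral_Ioo_meas_lt {α : Type*} [MeasurableSpace α] (μ : Measure α)
    {f : α → ℝ≥0∞} (hf : Measurable f) (f_le : ∀ x, f x ≤ 1) :
    ∫⁻ x, f x ∂μ = ∫⁻ s in Set.Ioo (0 : ℝ) 1, μ {x | ENNReal.ofReal s < f x} := by
  have f_ne_top x : f x ≠ ⊤ := ne_top_of_le_ne_top ENNReal.one_ne_top (f_le x)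
  have level_eq {s : ℝ} (hs : 0 < s) :
      {x | s < (f x).toReal} = {x | ENNReal.ofReal s < f x} := by
    ext x
    exact (ENNReal.ofReal_lt_iff_lt_toReal hs.le (f_ne_top x)).symm
  have level_empty {s : ℝ} (hs : 1 ≤ s) : {x | ENNReal.ofReal s < f x} = ∅ :=
    Set.eq_empty_of_forall_notMem fun x hx =>
      absurd ((f_le x).trans (ENNReal.one_le_ofReal.2 hs)) (not_le.2 hx)
  calc ∫⁻ x, f x ∂μ = ∫⁻ x, ENNReal.ofReal (f x).toReal ∂μ := by
        simp only [ENNReal.ofReal_toReal (f_ne_top _)]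
    _ = ∫⁻ s in Set.Ioi (0 : ℝ), μ {x | s < (f x).toReal} :=
      lintegral_eq_lintegral_meas_lt μ (Eventually.of_forall fun _ => ENNReal.toReal_nonneg)
        hf.ennreal_toReal.aemeasurable
    _ = ∫⁻ s in Set.Ioi (0 : ℝ), μ {x | ENNReal.ofReal s < f x} :=
      setLIntegral_congr_fun measurableSet_Ioi fun s hs => by rw [level_eq hs]
    _ = ∫⁻ s in Set.Ioo (0 : ℝ) 1, μ {x | ENNReal.ofReal s < f x} := by
      rw [← Set.Iio_inter_Ioi, ← Measure.restrict_restrict measurableSet_Iio]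
      refine (setLIntegral_eq_of_support_subset fun s hs => ?_).symm
      by_contra one_le
      exact hs (by simp only [level_empty (not_lt.1 one_le), measure_empty])

lemma measurable_meas_lt {α β : Type*} [MeasurableSpace α] [LinearOrder β] [MeasurableSpace β]
    [TopologicalSpace β] [BorelSpace β] [OrderClosedTopology β] (μ : Measure α) (f : α → β) :
    Measurable fun s : β => μ {x | s < f x} :=
  Antitone.measurable fun _ _ hst => measure_mono fun _ hx => lt_of_le_of_lt hst hx

/-- The hypothesis of the Prékopa–Leindler inequality with weights `a` and `b`. -/
structure PrekopaLeindlerTriple {E : Type*} [AddCommGroup E] [Module ℝ E] [MeasurableSpace E]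
    (a b : ℝ) (f g h : E → ℝ≥0∞) : Prop where
  measurable_left : Measurable f
  measurable_right : Measurable g
  measurable_bound : Measurable h
  rpow_mul_rpow_le : ∀ x y, f x ^ a * g y ^ b ≤ h (a • x + b • y)

/-- The measure `μ` satisfies the Prékopa–Leindler inequality with weights `a` and `b`; stated as a
property of measures because it passes to products and linear images. -/
def SatisfiesPrekopaLeindler {E : Type*} [AddCommGroup E] [Module ℝ E] [MeasurableSpace E]
    (a b : ℝ) (μ : Measure E) : Prop :=
  ∀ ⦃f g h : E → ℝ≥0∞⦄, PrekopaLeindlerTriple a b f g h →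
    (∫⁻ x, f x ∂μ) ^ a * (∫⁻ x, g x ∂μ) ^ b ≤ ∫⁻ x, h x ∂μ

variable {E F : Type*} [AddCommGroup E] [Module ℝ E] [MeasurableSpace E]
  [AddCommGroup F] [Module ℝ F] [MeasurableSpace F] {a b : ℝ} {f g h : E → ℝ≥0∞}

namespace PrekopaLeindlerTriple

lemma mono (H : PrekopaLeindlerTriple a b f g h) (ha : 0 ≤ a) (hb : 0 ≤ b) {f' g' : E → ℝ≥0∞}
    (hf' : Measurable f') (hg' : Measurable g') (f'_le : f' ≤ f) (g'_le : g' ≤ g) :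
    PrekopaLeindlerTriple a b f' g' h where
  measurable_left := hf'
  measurable_right := hg'
  measurable_bound := H.measurable_bound
  rpow_mul_rpow_le x y := by
    refine le_trans ?_ (H.rpow_mul_rpow_le x y)
    gcongr
    exacts [f'_le x, g'_le y]

lemma const_mul (H : PrekopaLeindlerTriple a b f g h) (ha : 0 ≤ a) (hb : 0 ≤ b) (c d : ℝ≥0∞) :
    PrekopaLeindlerTriple a b (fun x => c * f x) (fun x => d * g x)
      (fun x => c ^ a * d ^ b * h x) where
  measurable_left := H.measurable_left.const_mul c
  measurable_right := H.measurable_right.const_mul d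
  measurable_bound := H.measurable_bound.const_mul _
  rpow_mul_rpow_le x y := by
    rw [ENNReal.mul_rpow_of_nonneg _ _ ha, ENNReal.mul_rpow_of_nonneg _ _ hb, mul_mul_mul_comm]
    gcongr
    exact H.rpow_mul_rpow_le x y

lemma comp_linearMap (H : PrekopaLeindlerTriple a b f g h) (L : F →ₗ[ℝ] E) (hL : Measurable L) :
    PrekopaLeindlerTriple a b (f ∘ L) (g ∘ L) (h ∘ L) where
  measurable_left := H.measurable_left.comp hL
  measurable_right := H.measurable_right.comp hL
  measurable_bound := H.measurable_bound.comp hL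
  rpow_mul_rpow_le x y := by simpa using H.rpow_mul_rpow_le (L x) (L y)

lemma section_prod {f g h : E × F → ℝ≥0∞} (H : PrekopaLeindlerTriple a b f g h) (x y : E) :
    PrekopaLeindlerTriple a b (fun z => f (x, z)) (fun z => g (y, z))
      (fun z => h (a • x + b • y, z)) where
  measurable_left := H.measurable_left.comp measurable_prodMk_left
  measurable_right := H.measurable_right.comp measurable_prodMk_left
  measurable_bound := H.measurable_bound.comp measurable_prodMk_left
  rpow_mul_rpow_le z w := H.rpow_mul_rpow_le (x, z) (y, w)

end PrekopaLeindlerTriple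

variable {f g h : ℝ → ℝ≥0∞}

lemma PrekopaLeindlerTriple.volume_lt_add_le (H : PrekopaLeindlerTriple a b f g h)
    (ha : 0 < a) (hb : 0 < b) (hab : a + b = 1) {c : ℝ≥0∞} (hf : {x | c < f x}.Nonempty)
    (hg : {x | c < g x}.Nonempty) :
    ENNReal.ofReal a * volume {x | c < f x} + ENNReal.ofReal b * volume {x | c < g x} ≤
      volume {x | c < h x} := by
  have volume_smul {r : ℝ} (hr : 0 < r) (S : Set ℝ) :
      ENNReal.ofReal r * volume S = volume (r • S) := by
    simp [Measure.addHaar_smul, abs_of_pos hr]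
  rw [volume_smul ha, volume_smul hb]
  refine (volume_add_volume_le ?_ ?_ hf.smul_set hg.smul_set).trans (measure_mono ?_)
  · exact (measurableSet_lt measurable_const H.measurable_left).const_smul_of_ne_zero ha.ne'
  · exact (measurableSet_lt measurable_const H.measurable_right).const_smul_of_ne_zero hb.ne'
  · rintro _ ⟨_, ⟨x, hx, rfl⟩, _, ⟨y, hy, rfl⟩, rfl⟩
    calc c = c ^ a * c ^ b := by
          rw [← ENNReal.rpow_add_of_nonneg _ _ ha.le hb.le, hab, ENNReal.rpow_one]
      _ < f x ^ a * g y ^ b :=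
        ENNReal.mul_lt_mul (ENNReal.rpow_lt_rpow hx ha) (ENNReal.rpow_lt_rpow hy hb)
      _ ≤ h (a • x + b • y) := H.rpow_mul_rpow_le x y

/-- When both suprema are `1`, all superlevel sets of `f` and `g` are nonempty below height `1`, so
the one-dimensional Brunn–Minkowski inequality can be integrated over the heights. -/
lemma PrekopaLeindlerTriple.lintegral_le_of_iSup_eq_one (H : PrekopaLeindlerTriple a b f g h)
    (ha : 0 < a) (hb : 0 < b) (hab : a + b = 1) (hf : ⨆ x, f x = 1) (hg : ⨆ x, g x = 1) :
    (∫⁻ x, f x) ^ a * (∫⁻ x, g x) ^ b ≤ ∫⁻ x, h x := by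
  have level_le (s : ℝ) (hs : s ∈ Set.Ioo (0 : ℝ) 1) :
      ENNReal.ofReal a * volume {x | ENNReal.ofReal s < f x} +
          ENNReal.ofReal b * volume {x | ENNReal.ofReal s < g x} ≤
        volume {x | ENNReal.ofReal s < min (h x) 1} := by
    have s_lt_one : ENNReal.ofReal s < 1 := by simpa using hs.2
    simpa only [lt_min_iff, s_lt_one, and_true] using H.volume_lt_add_le ha hb hab
      (lt_iSup_iff.1 (s_lt_one.trans_eq hf.symm)) (lt_iSup_iff.1 (s_lt_one.trans_eq hg.symm))
  have level_measurable (k : ℝ → ℝ≥0∞) :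
      Measurable fun s : ℝ => volume {x | ENNReal.ofReal s < k x} :=
    (measurable_meas_lt volume k).comp ENNReal.measurable_ofReal
  calc (∫⁻ x, f x) ^ a * (∫⁻ x, g x) ^ b
      ≤ ENNReal.ofReal a * (∫⁻ x, f x) + ENNReal.ofReal b * ∫⁻ x, g x :=
        rpow_mul_rpow_le_ofReal_mul_add ha hb hab _ _
    _ = ∫⁻ s in Set.Ioo (0 : ℝ) 1, (ENNReal.ofReal a * volume {x | ENNReal.ofReal s < f x} +
          ENNReal.ofReal b * volume {x | ENNReal.ofReal s < g x}) := by
      rw [lintegral_eq_lintegral_Ioo_meas_lt _ H.measurable_left fun x => hf ▸ le_iSup f x,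
        lintegral_eq_lintegral_Ioo_meas_lt _ H.measurable_right fun x => hg ▸ le_iSup g x,
        lintegral_add_left ((level_measurable f).const_mul _),
        lintegral_const_mul _ (level_measurable f), lintegral_const_mul _ (level_measurable g)]
    _ ≤ ∫⁻ s in Set.Ioo (0 : ℝ) 1, volume {x | ENNReal.ofReal s < min (h x) 1} :=
      setLIntegral_mono (level_measurable _) level_le
    _ = ∫⁻ x, min (h x) 1 :=
      (lintegral_eq_lintegral_Ioo_meas_lt _ (H.measurable_bound.min measurable_const)
        fun _ => min_le_right _ _).symm
    _ ≤ ∫⁻ x, h x := lintegral_mono fun _ => min_le_left _ _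

lemma PrekopaLeindlerTriple.lintegral_le_of_iSup_ne_top (H : PrekopaLeindlerTriple a b f g h)
    (ha : 0 < a) (hb : 0 < b) (hab : a + b = 1) (hf : ⨆ x, f x ≠ ⊤) (hg : ⨆ x, g x ≠ ⊤) :
    (∫⁻ x, f x) ^ a * (∫⁻ x, g x) ^ b ≤ ∫⁻ x, h x := by
  rcases eq_or_ne (⨆ x, f x) 0 with hf₀ | hf₀
  · have f_eq_zero x : f x = 0 := ENNReal.iSup_eq_zero.1 hf₀ x
    simp [f_eq_zero, ha]
  rcases eq_or_ne (⨆ x, g x) 0 with hg₀ | hg₀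
  · have g_eq_zero x : g x = 0 := ENNReal.iSup_eq_zero.1 hg₀ x
    simp [g_eq_zero, hb]
  set c := (⨆ x, f x)⁻¹ with hc
  set d := (⨆ x, g x)⁻¹ with hd
  have scale_ne_zero : c ^ a * d ^ b ≠ 0 := by simp [hc, hd, hf, hg, ha.le, hb.le]
  have scale_ne_top : c ^ a * d ^ b ≠ ⊤ :=
    ENNReal.mul_ne_top (by simp [hc, hf₀, ha.le]) (by simp [hd, hg₀, hb.le])
  have normalized := (H.const_mul ha.le hb.le c d).lintegral_le_of_iSup_eq_one ha hb hab
    (by rw [← ENNReal.mul_iSup, ENNReal.inv_mul_cancel hf₀ hf])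
    (by rw [← ENNReal.mul_iSup, ENNReal.inv_mul_cancel hg₀ hg])
  rw [lintegral_const_mul _ H.measurable_left, lintegral_const_mul _ H.measurable_right,
    lintegral_const_mul _ H.measurable_bound, ENNReal.mul_rpow_of_nonneg _ _ ha.le,
    ENNReal.mul_rpow_of_nonneg _ _ hb.le, mul_mul_mul_comm] at normalized
  exact (ENNReal.mul_le_mul_iff_right scale_ne_zero scale_ne_top).1 normalized

lemma tendsto_lintegral_min_natCast {α : Type*} [MeasurableSpace α] (μ : Measure α)
    {f : α → ℝ≥0∞} (hf : Measurable f) :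
    Tendsto (fun n : ℕ => ∫⁻ x, min (f x) n ∂μ) atTop (𝓝 (∫⁻ x, f x ∂μ)) := by
  refine lintegral_tendsto_of_tendsto_of_monotone
    (fun n => (hf.min measurable_const).aemeasurable)
    (Eventually.of_forall fun x n m hnm => min_le_min_left _ (Nat.cast_le.2 hnm))
    (Eventually.of_forall fun x => ?_)
  simpa using tendsto_const_nhds.min ENNReal.tendsto_nat_nhds_top

lemma satisfiesPrekopaLeindler_real (ha : 0 < a) (hb : 0 < b) (hab : a + b = 1) :
    SatisfiesPrekopaLeindler a b (volume : Measure ℝ) := by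
  intro f g h H
  rcases eq_or_ne (∫⁻ x, f x) 0 with hf₀ | hf₀
  · simp [hf₀, ha]
  rcases eq_or_ne (∫⁻ x, g x) 0 with hg₀ | hg₀
  · simp [hg₀, hb]
  have tendsto_truncated : Tendsto
      (fun n : ℕ => (∫⁻ x, min (f x) n) ^ a * (∫⁻ x, min (g x) n) ^ b) atTop
      (𝓝 ((∫⁻ x, f x) ^ a * (∫⁻ x, g x) ^ b)) :=
    ENNReal.Tendsto.mul
      ((tendsto_lintegral_min_natCast volume H.measurable_left).ennrpow_const a)
      (Or.inl (by simp [ENNReal.rpow_eq_zero_iff, hf₀, ha.le]))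
      ((tendsto_lintegral_min_natCast volume H.measurable_right).ennrpow_const b)
      (Or.inl (by simp [ENNReal.rpow_eq_zero_iff, hg₀, hb.le]))
  refine le_of_tendsto' tendsto_truncated fun n => ?_
  have iSup_min_ne_top (k : ℝ → ℝ≥0∞) : ⨆ x, min (k x) n ≠ ⊤ :=
    ne_top_of_le_ne_top (ENNReal.natCast_ne_top n) (iSup_le fun _ => min_le_right _ _)
  exact (H.mono ha.le hb.le (H.measurable_left.min measurable_const)
    (H.measurable_right.min measurable_const) (fun _ => min_le_left _ _)
    (fun _ => min_le_left _ _)).lintegral_le_of_iSup_ne_top ha hb hab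
    (iSup_min_ne_top f) (iSup_min_ne_top g)

namespace SatisfiesPrekopaLeindler

lemma prod {μ : Measure E} {ν : Measure F} [SFinite ν] (hμ : SatisfiesPrekopaLeindler a b μ)
    (hν : SatisfiesPrekopaLeindler a b ν) : SatisfiesPrekopaLeindler a b (μ.prod ν) := by
  intro f g h H
  rw [lintegral_prod _ H.measurable_left.aemeasurable,
    lintegral_prod _ H.measurable_right.aemeasurable,
    lintegral_prod _ H.measurable_bound.aemeasurable]
  exact hμ ⟨H.measurable_left.lintegral_prod_right', H.measurable_right.lintegral_prod_right',
    H.measurable_bound.lintegral_prod_right', fun x y => hν (H.section_prod x y)⟩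

lemma map {μ : Measure E} (hμ : SatisfiesPrekopaLeindler a b μ) (L : E →ₗ[ℝ] F)
    (hL : Measurable L) : SatisfiesPrekopaLeindler a b (μ.map L) := by
  intro f g h H
  rw [lintegral_map H.measurable_left hL, lintegral_map H.measurable_right hL,
    lintegral_map H.measurable_bound hL]
  exact hμ (H.comp_linearMap L hL)

lemma smul {μ : Measure E} (hμ : SatisfiesPrekopaLeindler a b μ) (ha : 0 ≤ a) (hb : 0 ≤ b)
    (hab : a + b = 1) (c : ℝ≥0∞) : SatisfiesPrekopaLeindler a b (c • μ) := by
  intro f g h H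
  simp only [lintegral_smul_measure, smul_eq_mul]
  rw [ENNReal.mul_rpow_of_nonneg _ _ ha, ENNReal.mul_rpow_of_nonneg _ _ hb, mul_mul_mul_comm,
    ← ENNReal.rpow_add_of_nonneg _ _ ha hb, hab, ENNReal.rpow_one]
  gcongr
  exact hμ H

lemma measure_rpow_mul_le {μ : Measure E} (hμ : SatisfiesPrekopaLeindler a b μ) (ha : 0 < a)
    (hb : 0 < b) {A B : Set E} (hA : MeasurableSet A) (hB : MeasurableSet B) :
    μ A ^ a * μ B ^ b ≤ μ (a • A + b • B) := by
  rw [← measure_toMeasurable (a • A + b • B), ← lintegral_indicator_one hA,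
    ← lintegral_indicator_one hB, ← lintegral_indicator_one (measurableSet_toMeasurable _ _)]
  refine hμ ⟨measurable_one.indicator hA, measurable_one.indicator hB,
    measurable_one.indicator (measurableSet_toMeasurable _ _), fun x y => ?_⟩
  by_cases hx : x ∈ A
  · by_cases hy : y ∈ B
    · have combination_mem : a • x + b • y ∈ toMeasurable μ (a • A + b • B) :=
        subset_toMeasurable μ _ (Set.add_mem_add ⟨x, hx, rfl⟩ ⟨y, hy, rfl⟩)
      simp [hx, hy, combination_mem]
    · simp [hy, hb]
  · simp [hx, ha]

end SatisfiesPrekopaLeindler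

end PrekopaLeindler

section BrunnMinkowski

open Module

namespace SatisfiesPrekopaLeindler

variable {E F : Type*} [NormedAddCommGroup E] [NormedSpace ℝ E] [MeasurableSpace E] [BorelSpace E]
  [NormedAddCommGroup F] [NormedSpace ℝ F] [MeasurableSpace F] [BorelSpace F] {a b : ℝ}

lemma of_continuousLinearEquiv [FiniteDimensional ℝ F] {μ : Measure E} [μ.IsAddHaarMeasure]
    (hμ : SatisfiesPrekopaLeindler a b μ) (L : E ≃L[ℝ] F) (ha : 0 ≤ a) (hb : 0 ≤ b)
    (hab : a + b = 1) (ν : Measure F) [ν.IsAddHaarMeasure] :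
    SatisfiesPrekopaLeindler a b ν := by
  have := FiniteDimensional.proper_real F
  rw [Measure.isAddLeftInvariant_eq_smul ν (μ.map L)]
  exact (hμ.map L.toLinearEquiv.toLinearMap L.continuous.measurable).smul ha hb hab _

end SatisfiesPrekopaLeindler

lemma satisfiesPrekopaLeindler_pi {a b : ℝ} (ha : 0 < a) (hb : 0 < b) (hab : a + b = 1) (n : ℕ) :
    SatisfiesPrekopaLeindler a b (volume : Measure (Fin n → ℝ)) := by
  induction n with
  | zero =>
    intro f g h H
    rw [Measure.volume_pi_eq_dirac 0]
    simpa using H.rpow_mul_rpow_le 0 0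
  | succ n ih =>
    exact ((satisfiesPrekopaLeindler_real ha hb hab).prod ih).of_continuousLinearEquiv
      (Fin.consEquivL ℝ fun _ : Fin (n + 1) => ℝ) ha.le hb.le hab volume

variable {E : Type*} [NormedAddCommGroup E] [NormedSpace ℝ E] [FiniteDimensional ℝ E]
  [MeasurableSpace E] (μ : Measure E)

/-- The constant `n |B|^{1/n}` of the isoperimetric inequality in dimension `n`, where `B` is the
unit ball. -/
def isoperimetricConst : ℝ≥0∞ := finrank ℝ E * μ (Metric.ball 0 1) ^ (finrank ℝ E : ℝ)⁻¹

lemma isoperimetricConst_ne_top [IsFiniteMeasureOnCompacts μ] : isoperimetricConst μ ≠ ⊤ :=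
  ENNReal.mul_ne_top (ENNReal.natCast_ne_top _)
    (ENNReal.rpow_ne_top_of_nonneg (by positivity) measure_ball_lt_top.ne)

lemma isoperimetricConst_ne_zero [Nontrivial E] [μ.IsOpenPosMeasure] :
    isoperimetricConst μ ≠ 0 := by
  simp [isoperimetricConst, finrank_pos.ne', (Metric.measure_ball_pos μ (0 : E) one_pos).ne']

variable [BorelSpace E] [μ.IsAddHaarMeasure]

lemma satisfiesPrekopaLeindler_addHaar {a b : ℝ} (ha : 0 < a) (hb : 0 < b) (hab : a + b = 1) :
    SatisfiesPrekopaLeindler a b μ :=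
  (satisfiesPrekopaLeindler_pi ha hb hab (finrank ℝ E)).of_continuousLinearEquiv
    (ContinuousLinearEquiv.ofFinrankEq (by simp)) ha.le hb.le hab μ

lemma measure_smul_rpow_inv_finrank [Nontrivial E] {r : ℝ} (hr : 0 ≤ r) (A : Set E) :
    μ (r • A) ^ (finrank ℝ E : ℝ)⁻¹ =
      ENNReal.ofReal r * μ A ^ (finrank ℝ E : ℝ)⁻¹ := by
  rw [Measure.addHaar_smul, abs_of_nonneg (by positivity), ENNReal.ofReal_pow hr,
    ENNReal.mul_rpow_of_nonneg _ _ (by positivity),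
    ENNReal.pow_rpow_inv_natCast finrank_pos.ne']

lemma ofReal_add_le_measure_add_rpow [Nontrivial E] {A B : Set E} (hA : MeasurableSet A)
    (hB : MeasurableSet B) {s t : ℝ} (hs : 0 < s) (ht : 0 < t)
    (hAs : μ A ^ (finrank ℝ E : ℝ)⁻¹ = ENNReal.ofReal s)
    (hBt : μ B ^ (finrank ℝ E : ℝ)⁻¹ = ENNReal.ofReal t) :
    ENNReal.ofReal (s + t) ≤ μ (A + B) ^ (finrank ℝ E : ℝ)⁻¹ := by
  have inv_pos : 0 < (finrank ℝ E : ℝ)⁻¹ := by simp [finrank_pos]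
  have measure_normalize {S : Set E} {r : ℝ} (hr : 0 < r)
      (hS : μ S ^ (finrank ℝ E : ℝ)⁻¹ = ENNReal.ofReal r) : μ (r⁻¹ • S) = 1 := by
    refine ENNReal.rpow_left_injective inv_pos.ne' ?_
    simp only [measure_smul_rpow_inv_finrank μ (inv_nonneg.2 hr.le), hS, ENNReal.one_rpow]
    rw [← ENNReal.ofReal_mul (by positivity), inv_mul_cancel₀ hr.ne', ENNReal.ofReal_one]
  have combination_eq : (s / (s + t)) • s⁻¹ • A + (t / (s + t)) • t⁻¹ • B =
      (s + t)⁻¹ • (A + B) := by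
    rw [smul_smul, smul_smul, smul_add]
    congr 2 <;> field_simp
  have one_le : 1 ≤ μ ((s + t)⁻¹ • (A + B)) := by
    simpa [measure_normalize hs hAs, measure_normalize ht hBt, combination_eq] using
      (satisfiesPrekopaLeindler_addHaar μ (a := s / (s + t)) (b := t / (s + t))
        (by positivity) (by positivity) (by field_simp)).measure_rpow_mul_le (by positivity)
        (by positivity) (hA.const_smul₀ s⁻¹) (hB.const_smul₀ t⁻¹)
  have one_le_rpow := ENNReal.rpow_le_rpow one_le inv_pos.le
  rw [ENNReal.one_rpow, measure_smul_rpow_inv_finrank μ (by positivity),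
    ENNReal.ofReal_inv_of_pos (by positivity)] at one_le_rpow
  simpa only [mul_one] using (ENNReal.mul_le_iff_le_inv
    (ENNReal.ofReal_pos.2 (by positivity)).ne' ENNReal.ofReal_ne_top).2 one_le_rpow

theorem brunn_minkowski [Nontrivial E] {A B : Set E} (hA : MeasurableSet A)
    (hB : MeasurableSet B) (hA₀ : A.Nonempty) (hB₀ : B.Nonempty) :
    μ A ^ (finrank ℝ E : ℝ)⁻¹ + μ B ^ (finrank ℝ E : ℝ)⁻¹ ≤
      μ (A + B) ^ (finrank ℝ E : ℝ)⁻¹ := by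
  have le_right : μ B ≤ μ (A + B) := measure_le_measure_add_of_nonempty μ hA₀ B
  have le_left : μ A ≤ μ (A + B) := add_comm A B ▸ measure_le_measure_add_of_nonempty μ hB₀ A
  rcases eq_or_ne (μ A ^ (finrank ℝ E : ℝ)⁻¹) 0 with hA_zero | hA_zero
  · rw [hA_zero, zero_add]
    gcongr
  rcases eq_or_ne (μ B ^ (finrank ℝ E : ℝ)⁻¹) 0 with hB_zero | hB_zero
  · rw [hB_zero, add_zero]
    gcongr
  rcases eq_or_ne (μ (A + B) ^ (finrank ℝ E : ℝ)⁻¹) ⊤ with hAB | hAB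
  · simp [hAB]
  have hA_top : μ A ^ (finrank ℝ E : ℝ)⁻¹ ≠ ⊤ := ne_top_of_le_ne_top hAB (by gcongr)
  have hB_top : μ B ^ (finrank ℝ E : ℝ)⁻¹ ≠ ⊤ := ne_top_of_le_ne_top hAB (by gcongr)
  rw [← ENNReal.ofReal_toReal hA_top, ← ENNReal.ofReal_toReal hB_top,
    ← ENNReal.ofReal_add ENNReal.toReal_nonneg ENNReal.toReal_nonneg]
  exact ofReal_add_le_measure_add_rpow μ hA hB (ENNReal.toReal_pos hA_zero hA_top)
    (ENNReal.toReal_pos hB_zero hB_top) (ENNReal.ofReal_toReal hA_top).symm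
    (ENNReal.ofReal_toReal hB_top).symm

lemma le_measure_thickening [Nontrivial E] {A : Set E} (hA : MeasurableSet A) (hA₀ : A.Nonempty)
    {t : ℝ} (ht : 0 < t) :
    μ A + ENNReal.ofReal t * isoperimetricConst μ * μ A ^ (1 - (finrank ℝ E : ℝ)⁻¹) ≤
      μ (Metric.thickening t A) := by
  set n := finrank ℝ E
  have n_pos : 0 < n := finrank_pos
  set α := μ A ^ (n : ℝ)⁻¹
  have pow_α : α ^ n = μ A := ENNReal.rpow_inv_natCast_pow n_pos.ne' _
  have pow_pred_α : α ^ (n - 1) = μ A ^ (1 - (n : ℝ)⁻¹) := by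
    rw [← ENNReal.rpow_natCast, ← ENNReal.rpow_mul, Nat.cast_pred n_pos]
    congr 1
    field_simp
  have ball_eq : μ (Metric.ball 0 t) ^ (n : ℝ)⁻¹ =
      ENNReal.ofReal t * μ (Metric.ball 0 1) ^ (n : ℝ)⁻¹ := by
    rw [← smul_unitBall_of_pos ht, measure_smul_rpow_inv_finrank μ ht.le]
  calc μ A + ENNReal.ofReal t * isoperimetricConst μ * μ A ^ (1 - (n : ℝ)⁻¹)
      = α ^ n + n * α ^ (n - 1) * μ (Metric.ball 0 t) ^ (n : ℝ)⁻¹ := by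
        rw [pow_α, pow_pred_α, ball_eq, isoperimetricConst]
        ring
    _ ≤ (α + μ (Metric.ball 0 t) ^ (n : ℝ)⁻¹) ^ n :=
      pow_add_mul_le_add_pow_of_sq_nonneg bot_le bot_le bot_le bot_le n
    _ ≤ (μ (A + Metric.ball 0 t) ^ (n : ℝ)⁻¹) ^ n := by
      gcongr
      exact brunn_minkowski μ hA measurableSet_ball hA₀ ⟨0, by simpa⟩
    _ = μ (Metric.thickening t A) := by
      rw [add_ball_zero, ENNReal.rpow_inv_natCast_pow n_pos.ne']

end BrunnMinkowski

section LayerCake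

variable {α F : Type*} [MeasurableSpace α] [NormedAddCommGroup F] {μ : Measure α}

lemma setLIntegral_rpow_sub_one_le {f : α → ℝ≥0∞} (hf : AEMeasurable f μ) {p : ℝ} (hp : 1 ≤ p)
    (S : Set α) :
    ∫⁻ x in S, f x ^ (p - 1) ∂μ ≤ μ S ^ p⁻¹ * (∫⁻ x, f x ^ p ∂μ) ^ (1 - p⁻¹) := by
  have p_pos : 0 < p := one_pos.trans_le hp
  have conj_nonneg : 0 ≤ 1 - p⁻¹ := sub_nonneg.2 (inv_le_one_of_one_le₀ hp)
  have exponent_eq : p * (1 - p⁻¹) = p - 1 := by field_simp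
  have holder := ENNReal.lintegral_mul_norm_pow_le (μ := μ.restrict S) (f := fun _ => 1)
    (g := fun x => f x ^ p) aemeasurable_const (hf.restrict.pow_const p) (inv_nonneg.2 p_pos.le)
    conj_nonneg (add_sub_cancel _ _)
  simp only [ENNReal.one_rpow, one_mul, ← ENNReal.rpow_mul, exponent_eq, lintegral_const,
    Measure.restrict_apply_univ] at holder
  refine holder.trans ?_
  gcongr
  exact Measure.restrict_le_self

lemma lintegral_enorm_rpow_eq_lintegral_meas_lt {f : α → F} (hf : AEStronglyMeasurable f μ)
    {p : ℝ} (hp : 1 ≤ p) :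
    ∫⁻ x, ‖f x‖ₑ ^ p ∂μ =
      ∫⁻ s in Set.Ioi (0 : ℝ), ∫⁻ x in {x | s < ‖f x‖}, ‖f x‖ₑ ^ (p - 1) ∂μ := by
  have weight_measurable : AEMeasurable (fun x => ‖f x‖ₑ ^ (p - 1)) μ := hf.enorm.pow_const _
  have norm_measurable : AEMeasurable (fun x => ‖f x‖) μ := hf.norm.aemeasurable
  have layerCake := lintegral_eq_lintegral_meas_lt (μ.withDensity fun x => ‖f x‖ₑ ^ (p - 1))
    (f := fun x => ‖f x‖) (Eventually.of_forall fun x => norm_nonneg _)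
    (norm_measurable.mono_ac (withDensity_absolutelyContinuous _ _))
  rw [lintegral_withDensity_eq_lintegral_mul₀ weight_measurable
    norm_measurable.ennreal_ofReal] at layerCake
  simp only [Pi.mul_apply, ofReal_norm] at layerCake
  calc ∫⁻ x, ‖f x‖ₑ ^ p ∂μ = ∫⁻ x, ‖f x‖ₑ ^ (p - 1) * ‖f x‖ₑ ∂μ := by
        refine lintegral_congr fun x => ?_
        conv_rhs => rw [← ENNReal.rpow_one ‖f x‖ₑ, ← ENNReal.rpow_mul, one_mul,
          ← ENNReal.rpow_add_of_nonneg _ _ (sub_nonneg.2 hp) zero_le_one, sub_add_cancel]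
    _ = _ := layerCake.trans <| lintegral_congr fun s =>
      withDensity_apply₀ _ (nullMeasurableSet_lt aemeasurable_const norm_measurable)

lemma eLpNorm_le_lintegral_meas_rpow {f : α → F} {p : ℝ} (hp : 1 ≤ p)
    (hf : MemLp f (ENNReal.ofReal p) μ) :
    eLpNorm f (ENNReal.ofReal p) μ ≤ ∫⁻ s in Set.Ioi (0 : ℝ), μ {x | s < ‖f x‖} ^ p⁻¹ := by
  have p_pos : 0 < p := one_pos.trans_le hp
  have conj_nonneg : 0 ≤ 1 - p⁻¹ := sub_nonneg.2 (inv_le_one_of_one_le₀ hp)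
  have norm_eq : eLpNorm f (ENNReal.ofReal p) μ = (∫⁻ x, ‖f x‖ₑ ^ p ∂μ) ^ p⁻¹ := by
    rw [eLpNorm_eq_lintegral_rpow_enorm_toReal (by simpa) ENNReal.ofReal_ne_top,
      ENNReal.toReal_ofReal p_pos.le, one_div]
  have norm_ne_top := hf.eLpNorm_ne_top
  rw [norm_eq] at norm_ne_top ⊢
  set I := ∫⁻ x, ‖f x‖ₑ ^ p ∂μ
  rcases eq_or_ne I 0 with I_zero | I_zero
  · simp [I_zero, p_pos]
  have I_ne_top : I ≠ ⊤ := by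
    rwa [Ne, ENNReal.rpow_eq_top_iff_of_pos (by positivity)] at norm_ne_top
  have holder : I ^ p⁻¹ * I ^ (1 - p⁻¹) ≤
      (∫⁻ s in Set.Ioi (0 : ℝ), μ {x | s < ‖f x‖} ^ p⁻¹) * I ^ (1 - p⁻¹) :=
    calc I ^ p⁻¹ * I ^ (1 - p⁻¹) = I := by
          rw [← ENNReal.rpow_add_of_nonneg _ _ (by positivity) conj_nonneg, add_sub_cancel,
            ENNReal.rpow_one]
      _ = ∫⁻ s in Set.Ioi (0 : ℝ), ∫⁻ x in {x | s < ‖f x‖}, ‖f x‖ₑ ^ (p - 1) ∂μ :=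
        lintegral_enorm_rpow_eq_lintegral_meas_lt hf.1 hp
      _ ≤ ∫⁻ s in Set.Ioi (0 : ℝ), μ {x | s < ‖f x‖} ^ p⁻¹ * I ^ (1 - p⁻¹) :=
        lintegral_mono fun s => setLIntegral_rpow_sub_one_le hf.1.enorm hp _
      _ = _ := lintegral_mul_const' _ _ (ENNReal.rpow_ne_top_of_nonneg conj_nonneg I_ne_top)
  rwa [ENNReal.mul_le_mul_iff_left] at holder
  · simp [I_zero, I_ne_top]
  · exact ENNReal.rpow_ne_top_of_nonneg conj_nonneg I_ne_top

end LayerCake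

section Gradient

open Module

variable {E F : Type*} [NormedAddCommGroup E] [NormedSpace ℝ E] [NormedAddCommGroup F]
  [NormedSpace ℝ F]

lemma exists_norm_le_add_norm_fderiv {v : E → F} (hv : ContDiff ℝ 1 v)
    (hc : HasCompactSupport v) {δ : ℝ} (hδ : 0 < δ) :
    ∃ t ∈ Set.Ioc (0 : ℝ) 1, ∀ x y, dist x y < t → ‖v y‖ ≤ ‖v x‖ + t * (‖fderiv ℝ v x‖ + δ) := by
  have uniform : UniformContinuous (fderiv ℝ v) :=
    (hc.fderiv ℝ).uniformContinuous_of_continuous (hv.continuous_fderiv one_ne_zero)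
  obtain ⟨τ, τ_pos, fderiv_close⟩ := Metric.uniformContinuous_iff.1 uniform δ hδ
  refine ⟨min τ 1, ⟨by positivity, min_le_right _ _⟩, fun x y hxy => ?_⟩
  have fderiv_le (z) (hz : z ∈ Metric.ball x (min τ 1)) : ‖fderiv ℝ v z‖ ≤ ‖fderiv ℝ v x‖ + δ := by
    have close := fderiv_close ((Metric.mem_ball.1 hz).trans_le (min_le_left _ _))
    rw [dist_eq_norm] at close
    linarith [norm_le_norm_add_norm_sub' (fderiv ℝ v z) (fderiv ℝ v x)]
  have meanValue : ‖v y - v x‖ ≤ (‖fderiv ℝ v x‖ + δ) * ‖y - x‖ :=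
    (convex_ball x (min τ 1)).norm_image_sub_le_of_norm_fderiv_le (𝕜 := ℝ)
      (fun z _ => hv.differentiable one_ne_zero z) fderiv_le
      (Metric.mem_ball_self (by positivity)) (Metric.mem_ball'.2 hxy)
  calc ‖v y‖ ≤ ‖v x‖ + ‖v y - v x‖ := norm_le_norm_add_norm_sub' _ _
    _ ≤ ‖v x‖ + (‖fderiv ℝ v x‖ + δ) * min τ 1 := by
      gcongr
      refine meanValue.trans ?_
      gcongr
      rw [← dist_eq_norm']
      exact hxy.le
    _ = _ := by rw [mul_comm]

variable [MeasurableSpace E] [BorelSpace E] [FiniteDimensional ℝ E] (μ : Measure E)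
  [μ.IsAddHaarMeasure]

lemma lintegral_add_le_of_dist_lt_imp_le (hdim : 1 < finrank ℝ E) {f g : E → ℝ}
    (hf : Measurable f) (hg : Measurable g) (hf₀ : 0 ≤ f) (hg₀ : 0 ≤ g) {t : ℝ} (ht : 0 < t)
    (hfg : ∀ x y, dist x y < t → f y ≤ g x) :
    ∫⁻ x, ENNReal.ofReal (f x) ∂μ + ENNReal.ofReal t * (isoperimetricConst μ *
        ∫⁻ s in Set.Ioi (0 : ℝ), μ {x | s < f x} ^ (1 - (finrank ℝ E : ℝ)⁻¹)) ≤
      ∫⁻ x, ENNReal.ofReal (g x) ∂μ := by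
  have := nontrivial_of_finrank_pos (one_pos.trans hdim)
  have exponent_pos : 0 < 1 - (finrank ℝ E : ℝ)⁻¹ :=
    sub_pos.2 (inv_lt_one_of_one_lt₀ (by exact_mod_cast hdim))
  have level_le (s : ℝ) : μ {x | s < f x} + ENNReal.ofReal t * isoperimetricConst μ *
      μ {x | s < f x} ^ (1 - (finrank ℝ E : ℝ)⁻¹) ≤ μ {x | s < g x} := by
    rcases {x | s < f x}.eq_empty_or_nonempty with level_empty | level_nonempty
    · simp [level_empty, exponent_pos]
    refine (le_measure_thickening μ (measurableSet_lt measurable_const hf) level_nonempty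
      ht).trans (measure_mono fun x hx => ?_)
    obtain ⟨y, hy, hxy⟩ := Metric.mem_thickening_iff.1 hx
    exact lt_of_lt_of_le hy (hfg x y hxy)
  rw [lintegral_eq_lintegral_meas_lt μ (Eventually.of_forall hf₀) hf.aemeasurable,
    lintegral_eq_lintegral_meas_lt μ (Eventually.of_forall hg₀) hg.aemeasurable, ← mul_assoc,
    ← lintegral_const_mul _ ((measurable_meas_lt μ f).pow_const _),
    ← lintegral_add_left (measurable_meas_lt μ f)]
  exact lintegral_mono level_le

lemma isoperimetricConst_mul_le_lintegral_fderiv_add (hdim : 1 < finrank ℝ E) {v : E → F}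
    (hv : ContDiff ℝ 1 v) (hc : HasCompactSupport v) {δ : ℝ} (hδ : 0 < δ) :
    isoperimetricConst μ *
        ∫⁻ s in Set.Ioi (0 : ℝ), μ {x | s < ‖v x‖} ^ (1 - (finrank ℝ E : ℝ)⁻¹) ≤
      ∫⁻ x, ‖fderiv ℝ v x‖ₑ ∂μ + ENNReal.ofReal δ * μ (Metric.cthickening 1 (tsupport v)) := by
  have := FiniteDimensional.proper_real E
  obtain ⟨t, ⟨t_pos, t_le_one⟩, firstOrder⟩ := exists_norm_le_add_norm_fderiv hv hc hδ
  set K := Metric.cthickening 1 (tsupport v)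
  have K_measurable : MeasurableSet K := hc.isCompact.cthickening.measurableSet
  have Dv_continuous : Continuous (fderiv ℝ v) := hv.continuous_fderiv one_ne_zero
  have v_measurable : Measurable fun x => ‖v x‖ := hv.continuous.norm.measurable
  set g : E → ℝ := K.indicator fun x => ‖v x‖ + t * (‖fderiv ℝ v x‖ + δ)
  have g_measurable : Measurable g := Measurable.indicator (by fun_prop) K_measurable
  have g_nonneg : 0 ≤ g := Set.indicator_nonneg fun x _ => by positivity
  have norm_le_g (x y) (hxy : dist x y < t) : ‖v y‖ ≤ g x := by
    rcases eq_or_ne (v y) 0 with hy | hy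
    · simpa [hy] using g_nonneg x
    have hxK : x ∈ K := Metric.mem_cthickening_of_dist_le x y 1 _
      (subset_tsupport v hy) (hxy.le.trans t_le_one)
    simpa only [g, Set.indicator_of_mem hxK] using firstOrder x y hxy
  have lintegral_g_le : ∫⁻ x, ENNReal.ofReal (g x) ∂μ ≤ ∫⁻ x, ENNReal.ofReal ‖v x‖ ∂μ +
      ENNReal.ofReal t * (∫⁻ x, ‖fderiv ℝ v x‖ₑ ∂μ + ENNReal.ofReal δ * μ K) := by
    rw [← setLIntegral_const, ← lintegral_indicator K_measurable,
      ← lintegral_add_left Dv_continuous.enorm.measurable,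
      ← lintegral_const_mul' _ _ ENNReal.ofReal_ne_top,
      ← lintegral_add_left v_measurable.ennreal_ofReal]
    refine lintegral_mono fun x => ?_
    by_cases hx : x ∈ K
    · simp only [g, Set.indicator_of_mem hx]
      rw [ENNReal.ofReal_add (norm_nonneg _) (by positivity), ENNReal.ofReal_mul t_pos.le,
        ENNReal.ofReal_add (norm_nonneg _) hδ.le, ofReal_norm (fderiv ℝ v x)]
    · simp [g, hx]
  have v_finite : ∫⁻ x, ENNReal.ofReal ‖v x‖ ∂μ ≠ ⊤ :=
    (hv.continuous.integrable_of_hasCompactSupport hc).norm.lintegral_lt_top.ne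
  have integrated := (lintegral_add_le_of_dist_lt_imp_le μ hdim v_measurable g_measurable
    (fun _ => norm_nonneg _) g_nonneg t_pos norm_le_g).trans lintegral_g_le
  rwa [ENNReal.add_le_add_iff_left v_finite, ENNReal.mul_le_mul_iff_right (by simpa)
    ENNReal.ofReal_ne_top] at integrated

lemma isoperimetricConst_mul_le_lintegral_fderiv (hdim : 1 < finrank ℝ E) {v : E → F}
    (hv : ContDiff ℝ 1 v) (hc : HasCompactSupport v) :
    isoperimetricConst μ *
        ∫⁻ s in Set.Ioi (0 : ℝ), μ {x | s < ‖v x‖} ^ (1 - (finrank ℝ E : ℝ)⁻¹) ≤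
      ∫⁻ x, ‖fderiv ℝ v x‖ₑ ∂μ := by
  have := FiniteDimensional.proper_real E
  have error_tendsto : Tendsto (fun δ : ℝ => ∫⁻ x, ‖fderiv ℝ v x‖ₑ ∂μ +
      ENNReal.ofReal δ * μ (Metric.cthickening 1 (tsupport v))) (𝓝[>] 0)
      (𝓝 (∫⁻ x, ‖fderiv ℝ v x‖ₑ ∂μ + ENNReal.ofReal 0 *
        μ (Metric.cthickening 1 (tsupport v)))) :=
    (ENNReal.Tendsto.mul_const
      ((ENNReal.continuous_ofReal.tendsto 0).mono_left nhdsWithin_le_nhds)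
      (Or.inr hc.isCompact.cthickening.measure_ne_top)).const_add _
  rw [ENNReal.ofReal_zero, zero_mul, add_zero] at error_tendsto
  exact ge_of_tendsto error_tendsto <| eventually_mem_nhdsWithin.mono fun δ hδ =>
    isoperimetricConst_mul_le_lintegral_fderiv_add μ hdim hv hc hδ

end Gradient

section Divergence

variable {N : ℕ} {ψ : Euc N → Euc N}

/-- The divergence of a vector field, written exactly as in `TVSet`. -/
def divergence (ψ : Euc N → Euc N) (x : Euc N) : ℝ :=
  ∑ i, fderiv ℝ (fun y => ψ y i) x (EuclideanSpace.single i 1)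

/-- The vector fields admissible in the definition of the total variation. -/
structure IsTestField (ψ : Euc N → Euc N) : Prop where
  contDiff : ContDiff ℝ 1 ψ
  hasCompactSupport : HasCompactSupport ψ
  norm_le_one : ∀ x, ‖ψ x‖ ≤ 1

lemma mem_upperBounds_TVSet {u : Euc N → ℝ} {M : ℝ} :
    M ∈ upperBounds (TVSet N u) ↔ ∀ ψ, IsTestField ψ → ∫ x, u x * divergence ψ x ≤ M := by
  constructor
  · exact fun h ψ hψ =>
      h ⟨ψ, hψ.contDiff, hψ.hasCompactSupport, hψ.norm_le_one, rfl⟩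
  · rintro h _ ⟨ψ, hψ, hc, norm_le, rfl⟩
    exact h ψ ⟨hψ, hc, norm_le⟩

lemma sum_apply_single_mul (L : Euc N →L[ℝ] ℝ) (z : Euc N) :
    ∑ i, L (EuclideanSpace.single i 1) * z i = L z := by
  conv_rhs => rw [← (EuclideanSpace.basisFun (Fin N) ℝ).sum_repr z]
  simp [mul_comm]

lemma zero_mem_TVSet (u : Euc N → ℝ) : 0 ∈ TVSet N u :=
  ⟨0, contDiff_const, HasCompactSupport.zero, by simp, by simp⟩

lemma tv_nonneg (u : Euc N → ℝ) : 0 ≤ tv N u :=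
  Real.sSup_nonneg' ⟨0, zero_mem_TVSet u, le_rfl⟩

lemma hasCompactSupport_apply (hc : HasCompactSupport ψ) (i : Fin N) :
    HasCompactSupport fun x => ψ x i :=
  hc.comp_left (g := fun z : Euc N => z i) rfl

lemma continuous_divergence (hψ : ContDiff ℝ 1 ψ) : Continuous (divergence ψ) :=
  continuous_finsetSum _ fun i _ =>
    ((contDiff_euclidean.1 hψ i).continuous_fderiv one_ne_zero).clm_apply continuous_const

lemma hasCompactSupport_divergence (hc : HasCompactSupport ψ) :
    HasCompactSupport (divergence ψ) := by
  refine HasCompactSupport.intro hc.isCompact fun x hx => Finset.sum_eq_zero fun i _ => ?_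
  have not_mem : x ∉ tsupport fun y => ψ y i :=
    fun h => hx (tsupport_comp_subset (g := fun z : Euc N => z i) rfl ψ h)
  rw [image_eq_zero_of_notMem_tsupport fun h => not_mem (tsupport_fderiv_subset ℝ h),
    zero_apply]

lemma divergence_smul (hψ : ContDiff ℝ 1 ψ) {χ : Euc N → ℝ} (hχ : ContDiff ℝ 1 χ) (x : Euc N) :
    divergence (fun y => χ y • ψ y) x = χ x * divergence ψ x + fderiv ℝ χ x (ψ x) := by
  simp only [divergence]
  rw [← sum_apply_single_mul, Finset.mul_sum, ← Finset.sum_add_distrib]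
  refine Finset.sum_congr rfl fun i _ => ?_
  simp only [PiLp.smul_apply, smul_eq_mul]
  rw [fderiv_fun_mul (hχ.differentiable one_ne_zero x)
    ((contDiff_euclidean.1 hψ i).differentiable one_ne_zero x)]
  simp [mul_comm]

lemma divergence_comp_add_right (ψ : Euc N → Euc N) (a x : Euc N) :
    divergence (fun y => ψ (y + a)) x = divergence ψ (x + a) :=
  Finset.sum_congr rfl fun i _ => by rw [fderiv_comp_add_right (f := fun y => ψ y i)]

namespace IsTestField

lemma comp_add_right (hψ : IsTestField ψ) (a : Euc N) : IsTestField fun x => ψ (x + a) where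
  contDiff := hψ.contDiff.comp (contDiff_id.add contDiff_const)
  hasCompactSupport := hψ.hasCompactSupport.comp_homeomorph (Homeomorph.addRight a)
  norm_le_one x := hψ.norm_le_one (x + a)

lemma smul (hψ : IsTestField ψ) {χ : Euc N → ℝ} (hχ : ContDiff ℝ 1 χ) (χ_le : ∀ x, ‖χ x‖ ≤ 1) :
    IsTestField fun x => χ x • ψ x where
  contDiff := hχ.smul hψ.contDiff
  hasCompactSupport := hψ.hasCompactSupport.smul_left (f := χ)
  norm_le_one x :=
    (norm_smul_le (χ x) (ψ x)).trans (mul_le_one₀ (χ_le x) (norm_nonneg _) (hψ.norm_le_one x))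

lemma integrable_mul_divergence (hψ : IsTestField ψ) {u : Euc N → ℝ} (hu : LocallyIntegrable u) :
    Integrable fun x => u x * divergence ψ x := by
  have := hu.integrable_smul_right_of_hasCompactSupport (continuous_divergence hψ.contDiff)
    (hasCompactSupport_divergence hψ.hasCompactSupport)
  simpa only [smul_eq_mul] using this

end IsTestField

lemma integral_mul_fderiv_of_lipschitzWith {f g : Euc N → ℝ} {C : ℝ≥0} (hf : LipschitzWith C f)
    (hg : ContDiff ℝ 1 g) (hc : HasCompactSupport g) (e : Euc N) :
    ∫ x, f x * fderiv ℝ g x e = -∫ x, lineDeriv ℝ f x e * g x := by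
  obtain ⟨D, hD⟩ := hg.lipschitzWith_of_hasCompactSupport hc one_ne_zero
  rw [hf.integral_lineDeriv_mul_eq hD hc e, ← integral_neg]
  refine integral_congr_ae (Eventually.of_forall fun x => ?_)
  simp only [(hg.differentiable one_ne_zero x).lineDeriv_eq_fderiv, map_neg]
  ring

lemma integral_mul_divergence_of_lipschitzWith {f : Euc N → ℝ} {C : ℝ≥0} (hf : LipschitzWith C f)
    (hψ : ContDiff ℝ 1 ψ) (hc : HasCompactSupport ψ) :
    ∫ x, f x * divergence ψ x = -∫ x, fderiv ℝ f x (ψ x) := by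
  have component_contDiff (i : Fin N) : ContDiff ℝ 1 fun x => ψ x i := contDiff_euclidean.1 hψ i
  have left_integrable (i : Fin N) : Integrable fun x =>
      f x * fderiv ℝ (fun y => ψ y i) x (EuclideanSpace.single i 1) :=
    (hf.continuous.mul (((component_contDiff i).continuous_fderiv one_ne_zero).clm_apply
      continuous_const)).integrable_of_hasCompactSupport
      ((hasCompactSupport_apply hc i).fderiv_apply ℝ _).mul_left
  have right_integrable (i : Fin N) : Integrable fun x =>
      lineDeriv ℝ f x (EuclideanSpace.single i 1) * ψ x i :=
    ((component_contDiff i).continuous.integrable_of_hasCompactSupport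
      (hasCompactSupport_apply hc i)).bdd_mul
      (measurable_lineDeriv hf.continuous).aestronglyMeasurable
      (Eventually.of_forall fun x => norm_lineDeriv_le_of_lipschitz ℝ hf)
  simp only [divergence, Finset.mul_sum]
  rw [integral_finsetSum _ fun i _ => left_integrable i]
  simp only [fun i => integral_mul_fderiv_of_lipschitzWith hf (component_contDiff i)
    (hasCompactSupport_apply hc i) (EuclideanSpace.single i 1)]
  rw [Finset.sum_neg_distrib, ← integral_finsetSum _ fun i _ => right_integrable i]
  refine congrArg Neg.neg (integral_congr_ae ?_)
  filter_upwards [hf.ae_differentiableAt (μ := volume)] with x hx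
  simp only [hx.lineDeriv_eq_fderiv, sum_apply_single_mul]

end Divergence

section SoftNormalize

variable {V : Type*} [NormedAddCommGroup V] [InnerProductSpace ℝ V]

/-- A smooth substitute for the unit vector `‖z‖⁻¹ • z`, recovered as `δ → 0`. -/
def softNormalize (δ : ℝ) (z : V) : V := (√(δ ^ 2 + ‖z‖ ^ 2))⁻¹ • z

lemma softNormalize_zero (δ : ℝ) : softNormalize δ (0 : V) = 0 :=
  smul_zero _

lemma contDiff_softNormalize {δ : ℝ} (hδ : δ ≠ 0) {n : WithTop ℕ∞} :
    ContDiff ℝ n (softNormalize δ : V → V) :=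
  (((contDiff_const.add (contDiff_norm_sq ℝ)).sqrt fun z => by positivity).inv
    fun z => by positivity).smul contDiff_id

lemma norm_softNormalize_le_one (δ : ℝ) (z : V) : ‖softNormalize δ z‖ ≤ 1 := by
  rw [softNormalize, norm_smul, norm_inv, Real.norm_of_nonneg (Real.sqrt_nonneg _)]
  exact inv_mul_le_one_of_le₀ (Real.le_sqrt_of_sq_le (by nlinarith)) (Real.sqrt_nonneg _)

lemma tendsto_inner_softNormalize (z : V) :
    Tendsto (fun δ => inner ℝ z (softNormalize δ z)) (𝓝 0) (𝓝 ‖z‖) := by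
  rcases eq_or_ne z 0 with rfl | hz
  · simp
  have continuousAt : ContinuousAt (fun δ => inner ℝ z (softNormalize δ z)) 0 := by
    simp only [softNormalize]
    exact continuousAt_const.inner <| ((by fun_prop : ContinuousAt _ _).inv₀
      (by simpa using hz)).smul continuousAt_const
  have value_eq : inner ℝ z (softNormalize 0 z) = ‖z‖ := by
    rw [softNormalize, inner_smul_right, real_inner_self_eq_norm_sq, zero_pow two_ne_zero, zero_add,
      Real.sqrt_sq (norm_nonneg z), sq, inv_mul_cancel_left₀ (norm_ne_zero_iff.2 hz)]
  exact value_eq ▸ continuousAt.tendsto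

lemma tendsto_integral_inner_softNormalize {α : Type*} [MeasurableSpace α] {μ : Measure α}
    {F : α → V} (hF : Integrable F μ) :
    Tendsto (fun δ => ∫ x, inner ℝ (F x) (softNormalize δ (F x)) ∂μ) (𝓝[≠] 0)
      (𝓝 (∫ x, ‖F x‖ ∂μ)) := by
  refine tendsto_integral_filter_of_dominated_convergence (fun x => ‖F x‖) ?_ ?_ hF.norm
    (Eventually.of_forall fun x => (tendsto_inner_softNormalize _).mono_left nhdsWithin_le_nhds)
  · filter_upwards [self_mem_nhdsWithin] with δ hδ
    exact hF.aestronglyMeasurable.inner <|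
      (contDiff_softNormalize hδ (n := 0)).continuous.comp_aestronglyMeasurable
        hF.aestronglyMeasurable
  · exact Eventually.of_forall fun δ => Eventually.of_forall fun x =>
      (norm_inner_le_norm _ _).trans
        (mul_le_of_le_one_right (norm_nonneg _) (norm_softNormalize_le_one δ _))

end SoftNormalize

section TotalVariation

variable {N : ℕ} {u : Euc N → ℝ} {M : ℝ}

lemma integral_inner_gradient_le_of_mem_upperBounds_TVSet {v : Euc N → ℝ} {ψ : Euc N → Euc N}
    (hv : ContDiff ℝ 1 v) (hc : HasCompactSupport v) (hM : M ∈ upperBounds (TVSet N v))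
    (hψ : IsTestField ψ) : ∫ x, inner ℝ (gradient v x) (ψ x) ≤ M := by
  obtain ⟨C, v_lipschitz⟩ := hv.lipschitzWith_of_hasCompactSupport hc one_ne_zero
  have neg_test : IsTestField fun x => -ψ x := by
    simpa only [neg_one_smul] using hψ.smul (χ := fun _ => -1) contDiff_const (by simp)
  have integral_le := mem_upperBounds_TVSet.1 hM _ neg_test
  rw [integral_mul_divergence_of_lipschitzWith v_lipschitz neg_test.contDiff
    neg_test.hasCompactSupport, ← integral_neg] at integral_le
  simpa only [map_neg, neg_neg, inner_gradient_left] using integral_le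

lemma isTestField_softNormalize {F : Euc N → Euc N} (hF : ContDiff ℝ 1 F)
    (hc : HasCompactSupport F) {δ : ℝ} (hδ : δ ≠ 0) :
    IsTestField fun x => softNormalize δ (F x) where
  contDiff := (contDiff_softNormalize hδ).comp hF
  hasCompactSupport := hc.comp_left (g := softNormalize δ) (softNormalize_zero δ)
  norm_le_one _ := norm_softNormalize_le_one δ _

lemma lintegral_fderiv_le_of_mem_upperBounds_TVSet {v : Euc N → ℝ} (hv : ContDiff ℝ 2 v)
    (hc : HasCompactSupport v) (hM : M ∈ upperBounds (TVSet N v)) :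
    ∫⁻ x, ‖fderiv ℝ v x‖ₑ ≤ ENNReal.ofReal M := by
  have grad_contDiff : ContDiff ℝ 1 (gradient v) :=
    (InnerProductSpace.toDual ℝ (Euc N)).symm.contDiff.comp (hv.fderiv_right le_rfl)
  have grad_support : HasCompactSupport (gradient v) := (hc.fderiv ℝ).comp_left (map_zero _)
  have grad_integrable : Integrable (gradient v) :=
    grad_contDiff.continuous.integrable_of_hasCompactSupport grad_support
  have integral_le : ∫ x, ‖gradient v x‖ ≤ M := by
    refine le_of_tendsto (tendsto_integral_inner_softNormalize grad_integrable) ?_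
    filter_upwards [self_mem_nhdsWithin] with δ hδ
    exact integral_inner_gradient_le_of_mem_upperBounds_TVSet (hv.of_le one_le_two) hc hM
      (isTestField_softNormalize grad_contDiff grad_support hδ)
  calc ∫⁻ x, ‖fderiv ℝ v x‖ₑ
    _ = ∫⁻ x, ‖gradient v x‖ₑ := lintegral_congr fun x =>
        ((InnerProductSpace.toDual ℝ (Euc N)).symm.enorm_map (fderiv ℝ v x)).symm
    _ = ENNReal.ofReal (∫ x, ‖gradient v x‖) :=
        (ofReal_integral_norm_eq_lintegral_enorm grad_integrable).symm
    _ ≤ ENNReal.ofReal M := ENNReal.ofReal_le_ofReal integral_le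

lemma integral_comp_sub_right_mul_divergence_le (hM : M ∈ upperBounds (TVSet N u))
    {ψ : Euc N → Euc N} (hψ : IsTestField ψ) (y : Euc N) :
    ∫ x, u (x - y) * divergence ψ x ≤ M := by
  rw [← integral_add_right_eq_self _ y]
  simpa only [add_sub_cancel_right, divergence_comp_add_right]
    using mem_upperBounds_TVSet.1 hM _ (hψ.comp_add_right y)

lemma mem_upperBounds_TVSet_convolution (hu : Integrable u) (hM : M ∈ upperBounds (TVSet N u))
    {η : Euc N → ℝ} (hη : Integrable η) (η_nonneg : 0 ≤ η) (η_integral : ∫ x, η x = 1) :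
    M ∈ upperBounds (TVSet N (η ⋆[ContinuousLinearMap.lsmul ℝ ℝ] u)) := by
  refine mem_upperBounds_TVSet.2 fun ψ hψ => ?_
  have div_continuous := continuous_divergence hψ.contDiff
  obtain ⟨c, div_le⟩ :=
    (hasCompactSupport_divergence hψ.hasCompactSupport).exists_bound_of_continuous div_continuous
  have integrable : Integrable
      (fun z : Euc N × Euc N => η z.2 * u (z.1 - z.2) * divergence ψ z.1) (volume.prod volume) := by
    refine Integrable.mul_bdd (c := c) ?_ (div_continuous.comp continuous_fst).aestronglyMeasurable
      (Eventually.of_forall fun z => div_le z.1)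
    simpa using Integrable.convolution_integrand (ContinuousLinearMap.lsmul ℝ ℝ) hη hu
  calc ∫ x, (η ⋆[ContinuousLinearMap.lsmul ℝ ℝ] u) x * divergence ψ x
    _ = ∫ x, ∫ y, η y * u (x - y) * divergence ψ x := by
        simp only [integral_mul_const]
        rfl
    _ = ∫ y, ∫ x, η y * u (x - y) * divergence ψ x := integral_integral_swap integrable
    _ ≤ ∫ y, η y * M := by
        refine integral_mono integrable.integral_prod_right (hη.mul_const M) fun y => ?_
        simp only [mul_assoc, integral_const_mul]
        exact mul_le_mul_of_nonneg_left (integral_comp_sub_right_mul_divergence_le hM hψ y)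
          (η_nonneg y)
    _ = M := by rw [integral_mul_const, η_integral, one_mul]

lemma mem_upperBounds_TVSet_mul (hu : Integrable u) (hM : M ∈ upperBounds (TVSet N u))
    {χ : Euc N → ℝ} (hχ : ContDiff ℝ 1 χ) (χ_le : ∀ x, ‖χ x‖ ≤ 1) {c : ℝ}
    (fderiv_le : ∀ x, ‖fderiv ℝ χ x‖ ≤ c) :
    M + c * ∫ x, ‖u x‖ ∈ upperBounds (TVSet N fun x => χ x * u x) := by
  refine mem_upperBounds_TVSet.2 fun ψ hψ => ?_
  have test := hψ.smul hχ χ_le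
  have fderiv_apply_le (x : Euc N) : ‖fderiv ℝ χ x (ψ x)‖ ≤ c :=
    ((fderiv ℝ χ x).le_of_opNorm_le_of_le (fderiv_le x) (hψ.norm_le_one x)).trans_eq (mul_one c)
  have fderiv_integrable : Integrable fun x => u x * fderiv ℝ χ x (ψ x) :=
    hu.mul_bdd ((hχ.continuous_fderiv one_ne_zero).clm_apply
      hψ.contDiff.continuous).aestronglyMeasurable (Eventually.of_forall fderiv_apply_le)
  calc ∫ x, χ x * u x * divergence ψ x
    _ = ∫ x, u x * divergence (fun y => χ y • ψ y) x - u x * fderiv ℝ χ x (ψ x) := by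
        refine integral_congr_ae (Eventually.of_forall fun x => ?_)
        simp only [divergence_smul hψ.contDiff hχ]
        ring
    _ = (∫ x, u x * divergence (fun y => χ y • ψ y) x) - ∫ x, u x * fderiv ℝ χ x (ψ x) :=
        integral_sub (test.integrable_mul_divergence hu.locallyIntegrable) fderiv_integrable
    _ ≤ M + ∫ x, c * ‖u x‖ := by
        rw [sub_eq_add_neg, ← integral_neg]
        refine add_le_add (mem_upperBounds_TVSet.1 hM _ test)
          (integral_mono fderiv_integrable.neg (hu.norm.const_mul c) fun x => ?_)
        rw [mul_comm c]
        exact (neg_le_abs _).trans ((norm_mul_le _ _).trans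
          (mul_le_mul_of_nonneg_left (fderiv_apply_le x) (norm_nonneg _)))
    _ = M + c * ∫ x, ‖u x‖ := by rw [integral_const_mul]

end TotalVariation

section Sobolev

lemma exists_seq_cutoff (E : Type*) [NormedAddCommGroup E] [NormedSpace ℝ E]
    [FiniteDimensional ℝ E] :
    ∃ (χ : ℕ → E → ℝ) (c : ℕ → ℝ), (∀ n, ContDiff ℝ 1 (χ n)) ∧ (∀ n, HasCompactSupport (χ n)) ∧
      (∀ n x, ‖χ n x‖ ≤ 1) ∧ (∀ n x, ‖fderiv ℝ (χ n) x‖ ≤ c n) ∧ Tendsto c atTop (𝓝 0) ∧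
      ∀ x, Tendsto (fun n => χ n x) atTop (𝓝 1) := by
  let b : ContDiffBump (0 : E) := ⟨1, 2, one_pos, one_lt_two⟩
  have b_contDiff : ContDiff ℝ 1 b := b.contDiff
  obtain ⟨C, fderiv_le⟩ := (b.hasCompactSupport.fderiv ℝ).exists_bound_of_continuous
    (b_contDiff.continuous_fderiv one_ne_zero)
  have scale_pos (n : ℕ) : (0 : ℝ) < 1 / (n + 1) := by positivity
  have scale_tendsto : Tendsto (fun n : ℕ => (1 : ℝ) / (n + 1)) atTop (𝓝 0) :=
    tendsto_one_div_add_atTop_nhds_zero_nat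
  refine ⟨fun n x => b ((1 / (n + 1) : ℝ) • x), fun n => 1 / (n + 1) * C,
    fun n => b_contDiff.comp (contDiff_const_smul _),
    fun n => b.hasCompactSupport.comp_homeomorph (Homeomorph.smulOfNeZero _ (scale_pos n).ne'),
    fun n x => (Real.norm_of_nonneg b.nonneg).trans_le b.le_one, fun n x => ?_,
    by simpa only [zero_mul] using scale_tendsto.mul_const C, fun x => ?_⟩
  · rw [fderiv_comp_smul, norm_smul, Real.norm_of_nonneg (scale_pos n).le]
    exact mul_le_mul_of_nonneg_left (fderiv_le _) (scale_pos n).le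
  · have b_zero : b ((0 : ℝ) • x) = 1 := by
      rw [zero_smul]
      exact b.one_of_mem_closedBall (Metric.mem_closedBall_self zero_le_one)
    have b_tendsto : Tendsto b (𝓝 ((0 : ℝ) • x)) (𝓝 1) := b_zero ▸ b.continuous.tendsto _
    exact b_tendsto.comp (scale_tendsto.smul_const x)

variable {N : ℕ} {u : Euc N → ℝ} {M : ℝ}

lemma isoperimetricConst_euc_ne_zero (hN : N ≠ 0) :
    isoperimetricConst (volume : Measure (Euc N)) ≠ 0 := by
  have : NeZero N := ⟨hN⟩
  exact isoperimetricConst_ne_zero _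

lemma eLpNorm_conjExponent_le_of_contDiff (hN : 2 ≤ N) (hu : ContDiff ℝ 2 u)
    (hc : HasCompactSupport u) (hM : M ∈ upperBounds (TVSet N u)) :
    eLpNorm u (ENNReal.ofReal (N : ℝ).conjExponent) volume ≤
      ENNReal.ofReal M / isoperimetricConst (volume : Measure (Euc N)) := by
  have dim_gt : 1 < Module.finrank ℝ (Euc N) := by rwa [finrank_euclideanSpace_fin]
  have conj : (N : ℝ).HolderConjugate (N : ℝ).conjExponent :=
    .conjExponent (Nat.one_lt_cast.2 hN)
  rw [ENNReal.le_div_iff_mul_le (.inl (isoperimetricConst_euc_ne_zero (by lia)))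
    (.inl (isoperimetricConst_ne_top _)), mul_comm]
  calc isoperimetricConst volume * eLpNorm u (ENNReal.ofReal (N : ℝ).conjExponent) volume
    _ ≤ isoperimetricConst volume *
          ∫⁻ s in Set.Ioi 0, volume {x | s < ‖u x‖} ^ (N : ℝ).conjExponent⁻¹ := by
        gcongr
        exact eLpNorm_le_lintegral_meas_rpow conj.symm.lt.le
          (hu.continuous.memLp_of_hasCompactSupport hc)
    _ ≤ ∫⁻ x, ‖fderiv ℝ u x‖ₑ := by
        rw [← conj.one_sub_inv]
        simpa only [finrank_euclideanSpace_fin] using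
          isoperimetricConst_mul_le_lintegral_fderiv volume dim_gt (hu.of_le one_le_two) hc
    _ ≤ ENNReal.ofReal M := lintegral_fderiv_le_of_mem_upperBounds_TVSet hu hc hM

lemma eLpNorm_conjExponent_le_of_hasCompactSupport (hN : 2 ≤ N) (hu : Integrable u)
    (hc : HasCompactSupport u) (hM : M ∈ upperBounds (TVSet N u)) :
    eLpNorm u (ENNReal.ofReal (N : ℝ).conjExponent) volume ≤
      ENNReal.ofReal M / isoperimetricConst (volume : Measure (Euc N)) := by
  let φ (n : ℕ) : ContDiffBump (0 : Euc N) :=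
    ⟨1 / (n + 1), 2 * (1 / (n + 1)), by positivity, lt_two_mul_self (by positivity)⟩
  have mollified_contDiff (n : ℕ) :
      ContDiff ℝ 2 ((φ n).normed volume ⋆[ContinuousLinearMap.lsmul ℝ ℝ] u) :=
    (φ n).hasCompactSupport_normed.contDiff_convolution_left _ (φ n).contDiff_normed
      hu.locallyIntegrable
  have radius_tendsto : Tendsto (fun n => (φ n).rOut) atTop (𝓝 0) := by
    simpa only [mul_zero] using (tendsto_one_div_add_atTop_nhds_zero_nat (𝕜 := ℝ)).const_mul 2
  refine Lp.eLpNorm_le_of_ae_tendsto (u := atTop) (Eventually.of_forall fun n => ?_)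
    (fun n => (mollified_contDiff n).continuous.aestronglyMeasurable)
    (ContDiffBump.ae_convolution_tendsto_right_of_locallyIntegrable (φ := φ) (K := 2)
      radius_tendsto (Eventually.of_forall fun n => le_rfl) hu.locallyIntegrable)
  exact eLpNorm_conjExponent_le_of_contDiff hN (mollified_contDiff n)
    ((φ n).hasCompactSupport_normed.convolution _ hc)
    (mem_upperBounds_TVSet_convolution hu hM (φ n).integrable_normed (φ n).nonneg_normed
      (φ n).integral_normed)

lemma eLpNorm_conjExponent_le (hN : 2 ≤ N) (hu : Integrable u)
    (hM : M ∈ upperBounds (TVSet N u)) :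
    eLpNorm u (ENNReal.ofReal (N : ℝ).conjExponent) volume ≤
      ENNReal.ofReal M / isoperimetricConst (volume : Measure (Euc N)) := by
  obtain ⟨χ, c, χ_contDiff, χ_support, χ_le, fderiv_le, c_tendsto, χ_tendsto⟩ :=
    exists_seq_cutoff (Euc N)
  have cutoff_integrable (n : ℕ) : Integrable fun x => χ n x * u x :=
    hu.bdd_mul (χ_contDiff n).continuous.aestronglyMeasurable (Eventually.of_forall (χ_le n))
  have bound_tendsto : Tendsto (fun n => ENNReal.ofReal (M + c n * ∫ x, ‖u x‖) /
      isoperimetricConst (volume : Measure (Euc N))) atTop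
      (𝓝 (ENNReal.ofReal M / isoperimetricConst (volume : Measure (Euc N)))) := by
    refine ENNReal.Tendsto.div_const (ENNReal.tendsto_ofReal ?_)
      (.inr (isoperimetricConst_euc_ne_zero (by lia)))
    simpa only [zero_mul, add_zero] using (c_tendsto.mul_const (∫ x, ‖u x‖)).const_add M
  calc eLpNorm u (ENNReal.ofReal (N : ℝ).conjExponent) volume
    _ ≤ liminf (fun n => eLpNorm (fun x => χ n x * u x) _ volume) atTop :=
        Lp.eLpNorm_lim_le_liminf_eLpNorm (fun n => (cutoff_integrable n).aestronglyMeasurable) u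
          (Eventually.of_forall fun x => by
            simpa only [one_mul] using (χ_tendsto x).mul_const (u x))
    _ ≤ liminf (fun n => ENNReal.ofReal (M + c n * ∫ x, ‖u x‖) / isoperimetricConst volume)
          atTop :=
        liminf_le_liminf <| Eventually.of_forall fun n =>
          eLpNorm_conjExponent_le_of_hasCompactSupport hN (cutoff_integrable n)
            (χ_support n).mul_right
            (mem_upperBounds_TVSet_mul hu hM (χ_contDiff n) (χ_le n) (fderiv_le n))
    _ = ENNReal.ofReal M / isoperimetricConst volume := bound_tendsto.liminf_eq

end Sobolev

section UnitBall

variable {N : ℕ}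

lemma fderiv_thickenedIndicator_eq_zero {δ : ℝ} (hδ : 0 < δ) {A : Set (Euc N)} {x : Euc N}
    (hx : x ∉ Metric.thickening δ A \ A) :
    fderiv ℝ (fun y => (thickenedIndicator hδ A y : ℝ)) x = 0 := by
  by_cases mem_thickening : x ∈ Metric.thickening δ A
  · have mem : x ∈ A := by simpa [mem_thickening] using hx
    refine IsLocalMax.fderiv_eq_zero (Eventually.of_forall fun y => ?_)
    simp only [thickenedIndicator_one hδ A mem]
    exact_mod_cast thickenedIndicator_le_one hδ A y
  · refine IsLocalMin.fderiv_eq_zero (Eventually.of_forall fun y => ?_)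
    simp only [thickenedIndicator_zero hδ A mem_thickening]
    exact NNReal.coe_nonneg _

lemma integral_thickenedIndicator_mul_divergence_le {δ : ℝ} (hδ : 0 < δ) {A : Set (Euc N)}
    (hA : Bornology.IsBounded A) {ψ : Euc N → Euc N} (hψ : IsTestField ψ) :
    ∫ x, (thickenedIndicator hδ A x : ℝ) * divergence ψ x ≤
      δ⁻¹ * volume.real (Metric.thickening δ A \ A) := by
  let f (x : Euc N) : ℝ := thickenedIndicator hδ A x
  have f_lipschitz : LipschitzWith δ.toNNReal⁻¹ f := lipschitzWith_thickenedIndicator hδ A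
  have fderiv_apply_le (x : Euc N) : ‖fderiv ℝ f x (ψ x)‖ ≤ δ⁻¹ := by
    refine ((fderiv ℝ f x).le_of_opNorm_le_of_le (norm_fderiv_le_of_lipschitz ℝ f_lipschitz)
      (hψ.norm_le_one x)).trans_eq ?_
    rw [mul_one, NNReal.coe_inv, Real.coe_toNNReal _ hδ.le]
  calc ∫ x, f x * divergence ψ x
    _ = -∫ x, fderiv ℝ f x (ψ x) :=
        integral_mul_divergence_of_lipschitzWith f_lipschitz hψ.contDiff hψ.hasCompactSupport
    _ = -∫ x in Metric.thickening δ A \ A, fderiv ℝ f x (ψ x) := by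
        rw [setIntegral_eq_integral_of_forall_compl_eq_zero fun x hx => ?_]
        rw [fderiv_thickenedIndicator_eq_zero hδ hx, zero_apply]
    _ ≤ δ⁻¹ * volume.real (Metric.thickening δ A \ A) :=
        (neg_le_abs _).trans (norm_setIntegral_le_of_norm_le_const
          (hA.thickening.subset Set.sdiff_subset).measure_lt_top fun x _ => fderiv_apply_le x)

lemma mem_upperBounds_TVSet_indicator {A : Set (Euc N)} (hA : IsCompact A) {P : ℝ}
    (hP : Tendsto (fun δ => δ⁻¹ * volume.real (Metric.thickening δ A \ A)) (𝓝[>] 0) (𝓝 P)) :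
    P ∈ upperBounds (TVSet N (A.indicator 1)) := by
  refine mem_upperBounds_TVSet.2 fun ψ hψ => ?_
  have δ_pos (n : ℕ) : (0 : ℝ) < 1 / (n + 1) := by positivity
  have δ_tendsto : Tendsto (fun n : ℕ => (1 : ℝ) / (n + 1)) atTop (𝓝 0) :=
    tendsto_one_div_add_atTop_nhds_zero_nat
  have integral_tendsto : Tendsto
      (fun n => ∫ x, (thickenedIndicator (δ_pos n) A x : ℝ) * divergence ψ x) atTop
      (𝓝 (∫ x, A.indicator 1 x * divergence ψ x)) := by
    have div_continuous := continuous_divergence hψ.contDiff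
    refine tendsto_integral_of_dominated_convergence (fun x => ‖divergence ψ x‖) (fun n => ?_)
      (div_continuous.integrable_of_hasCompactSupport
        (hasCompactSupport_divergence hψ.hasCompactSupport)).norm
      (fun n => Eventually.of_forall fun x => ?_) (Eventually.of_forall fun x => ?_)
    · exact (((NNReal.continuous_coe.comp
        (thickenedIndicator (δ_pos n) A).continuous)).mul div_continuous).aestronglyMeasurable
    · rw [norm_mul, NNReal.norm_eq]
      exact mul_le_of_le_one_left (norm_nonneg _) (thickenedIndicator_le_one _ A x)
    · refine Tendsto.mul_const _ ?_
      have := tendsto_pi_nhds.1 (thickenedIndicator_tendsto_indicator_closure δ_pos δ_tendsto A) x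
      rw [hA.isClosed.closure_eq] at this
      convert NNReal.tendsto_coe.2 this using 2
      by_cases mem : x ∈ A <;> simp [mem]
  exact le_of_tendsto_of_tendsto' integral_tendsto
    (hP.comp (tendsto_nhdsWithin_iff.2 ⟨δ_tendsto, Eventually.of_forall δ_pos⟩))
    fun n => integral_thickenedIndicator_mul_divergence_le (δ_pos n) hA.isBounded hψ

lemma volume_real_thickening_closedBall_diff {δ : ℝ} (hδ : 0 < δ) :
    volume.real (Metric.thickening δ (Metric.closedBall (0 : Euc N) 1) \ Metric.closedBall 0 1) =
      ((1 + δ) ^ N - 1) * volume.real (Metric.ball (0 : Euc N) 1) := by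
  rw [thickening_closedBall hδ zero_le_one,
    measureReal_sdiff (Metric.closedBall_subset_ball (by linarith)) measurableSet_closedBall,
    measureReal_def, Measure.addHaar_ball_of_pos _ _ (by positivity), ENNReal.toReal_mul,
    ENNReal.toReal_ofReal (by positivity), Measure.addHaar_real_closedBall _ _ zero_le_one,
    finrank_euclideanSpace_fin, ← measureReal_def]
  ring

lemma omegaS_mem_upperBounds_TVSet :
    omegaS N ∈ upperBounds (TVSet N ((Metric.closedBall 0 1).indicator 1)) := by
  refine mem_upperBounds_TVSet_indicator (isCompact_closedBall 0 1) ?_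
  have slope_tendsto : Tendsto (fun δ : ℝ => δ⁻¹ * ((1 + δ) ^ N - 1)) (𝓝[>] 0) (𝓝 N) := by
    simpa using (hasDerivAt_pow N (1 : ℝ)).tendsto_slope_zero_right
  refine (slope_tendsto.mul_const (volume.real (Metric.ball (0 : Euc N) 1))).congr' ?_
  filter_upwards [self_mem_nhdsWithin] with δ hδ
  rw [volume_real_thickening_closedBall_diff hδ, mul_assoc]

end UnitBall

section Interpolation

lemma eLpNorm_rpow_add_le {α E : Type*} [MeasurableSpace α] {μ : Measure α} [NormedAddCommGroup E]
    {f : α → E} (hf : AEStronglyMeasurable f μ) {a b r p : ℝ} (ha : 0 ≤ a) (hb : 0 ≤ b)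
    (hr : 0 < r) (hp : 0 < p) (hab : a / r + b / p = 1) :
    eLpNorm f (ENNReal.ofReal (a + b)) μ ^ (a + b) ≤
      eLpNorm f (ENNReal.ofReal r) μ ^ a * eLpNorm f (ENNReal.ofReal p) μ ^ b := by
  have lintegral_eq {s : ℝ} (hs : 0 < s) (c : ℝ) :
      eLpNorm f (ENNReal.ofReal s) μ ^ c = (∫⁻ x, ‖f x‖ₑ ^ s ∂μ) ^ (c / s) := by
    rw [eLpNorm_eq_lintegral_rpow_enorm_toReal (by simpa using hs) ENNReal.ofReal_ne_top,
      ENNReal.toReal_ofReal hs.le, ← ENNReal.rpow_mul, one_div_mul_eq_div]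
  have add_pos : 0 < a + b := by
    refine (add_nonneg ha hb).lt_of_ne fun h => ?_
    obtain ⟨rfl, rfl⟩ := (add_eq_zero_iff_of_nonneg ha hb).1 h.symm
    simp at hab
  rw [lintegral_eq add_pos, lintegral_eq hr, lintegral_eq hp, div_self add_pos.ne',
    ENNReal.rpow_one]
  calc ∫⁻ x, ‖f x‖ₑ ^ (a + b) ∂μ
    _ = ∫⁻ x, (‖f x‖ₑ ^ r) ^ (a / r) * (‖f x‖ₑ ^ p) ^ (b / p) ∂μ := by
        simp_rw [← ENNReal.rpow_mul, mul_div_cancel₀ a hr.ne', mul_div_cancel₀ b hp.ne',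
          ENNReal.rpow_add_of_nonneg _ _ ha hb]
    _ ≤ (∫⁻ x, ‖f x‖ₑ ^ r ∂μ) ^ (a / r) * (∫⁻ x, ‖f x‖ₑ ^ p ∂μ) ^ (b / p) :=
        ENNReal.lintegral_mul_norm_pow_le (hf.enorm.pow_const r) (hf.enorm.pow_const p)
          (by positivity) (by positivity) hab

end Interpolation

section BestConstant

variable {N : ℕ}

lemma volume_real_unitBall_pos (N : ℕ) : 0 < volume.real (Metric.ball (0 : Euc N) 1) :=
  ENNReal.toReal_pos (Metric.measure_ball_pos _ _ one_pos).ne' measure_ball_lt_top.ne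

lemma omegaS_pos (hN : N ≠ 0) : 0 < omegaS N :=
  mul_pos (by positivity) (volume_real_unitBall_pos N)

lemma toReal_isoperimetricConst_pow (hN : N ≠ 0) :
    (isoperimetricConst (volume : Measure (Euc N))).toReal ^ N = N ^ (N - 1) * omegaS N := by
  rw [isoperimetricConst, finrank_euclideanSpace_fin, ENNReal.toReal_mul, ENNReal.toReal_natCast,
    ← ENNReal.toReal_rpow, mul_pow, Real.rpow_inv_natCast_pow ENNReal.toReal_nonneg hN, omegaS,
    ← mul_assoc, pow_sub_one_mul hN]

lemma toReal_eLpNorm_conjExponent_le (hN : 2 ≤ N) {u : Euc N → ℝ} (hu : MemBV N u) :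
    (eLpNorm u (ENNReal.ofReal (N : ℝ).conjExponent) volume).toReal ≤
      tv N u / (isoperimetricConst (volume : Measure (Euc N))).toReal := by
  have key := eLpNorm_conjExponent_le hN hu.1 (M := tv N u) fun r hr => le_csSup hu.2 hr
  have := ENNReal.toReal_mono
    (ENNReal.div_ne_top ENNReal.ofReal_ne_top (isoperimetricConst_euc_ne_zero (by lia))) key
  rwa [ENNReal.toReal_div, ENNReal.toReal_ofReal (tv_nonneg u)] at this

lemma nrmq_rpow_le (hN : 2 ≤ N) {q : ℝ} (hq1 : 1 ≤ q) (hq2 : q ≤ (N : ℝ) / (N - 1))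
    {u : Euc N → ℝ} (hu : MemBV N u) :
    nrmq N q u ^ q ≤ nrm1 N u ^ (q - (q - 1) * N) *
      (eLpNorm u (ENNReal.ofReal (N : ℝ).conjExponent) volume).toReal ^ ((q - 1) * (N : ℝ)) := by
  have hN1 : (1 : ℝ) < N := Nat.one_lt_cast.2 hN
  set a := q - (q - 1) * N with a_def
  set b := (q - 1) * (N : ℝ) with b_def
  have a_add_b : a + b = q := sub_add_cancel q b
  have b_nonneg : 0 ≤ b := mul_nonneg (by linarith) (by linarith)
  have a_nonneg : 0 ≤ a := by
    rw [le_div_iff₀ (by linarith)] at hq2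
    linarith
  have exponents : a / 1 + b / (N : ℝ).conjExponent = 1 := by
    have : (N : ℝ) - 1 ≠ 0 := by linarith
    rw [Real.conjExponent, a_def, b_def]
    field_simp
    ring
  have interpolation := eLpNorm_rpow_add_le hu.1.1 a_nonneg b_nonneg one_pos
    (Real.HolderConjugate.conjExponent hN1).symm.pos exponents
  rw [a_add_b, ENNReal.ofReal_one] at interpolation
  have nrm1_ne_top : eLpNorm u 1 volume ≠ ⊤ := (memLp_one_iff_integrable.2 hu.1).eLpNorm_ne_top
  have sobolev_ne_top : eLpNorm u (ENNReal.ofReal (N : ℝ).conjExponent) volume ≠ ⊤ :=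
    ne_top_of_le_ne_top (ENNReal.div_ne_top ENNReal.ofReal_ne_top
      (isoperimetricConst_euc_ne_zero (by lia)))
      (eLpNorm_conjExponent_le hN hu.1 fun r hr => le_csSup hu.2 hr)
  rw [nrmq, nrm1, ENNReal.toReal_rpow, ENNReal.toReal_rpow, ENNReal.toReal_rpow,
    ← ENNReal.toReal_mul]
  exact ENNReal.toReal_mono (ENNReal.mul_ne_top
    (ENNReal.rpow_ne_top_of_nonneg a_nonneg nrm1_ne_top)
    (ENNReal.rpow_ne_top_of_nonneg b_nonneg sobolev_ne_top)) interpolation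

lemma ratioQ_le (hN : 2 ≤ N) {q : ℝ} (hq1 : 1 ≤ q) (hq2 : q ≤ (N : ℝ) / (N - 1))
    {u : Euc N → ℝ} (hu : MemBV N u) :
    ratioQ N q u ≤ (1 / ((N : ℝ) ^ (N - 1) * omegaS N)) ^ (q - 1) := by
  have ω_pos : 0 < omegaS N := omegaS_pos (by lia)
  have tv_nonneg : 0 ≤ tv N u := tv_nonneg u
  have nrm1_nonneg : 0 ≤ nrm1 N u := ENNReal.toReal_nonneg
  refine div_le_of_le_mul₀ (by positivity) (by positivity) ?_
  set κ := (isoperimetricConst (volume : Measure (Euc N))).toReal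
  have κ_nonneg : 0 ≤ κ := ENNReal.toReal_nonneg
  have κ_rpow : κ ^ ((q - 1) * N) = (N ^ (N - 1) * omegaS N) ^ (q - 1) := by
    rw [mul_comm, Real.rpow_mul κ_nonneg, Real.rpow_natCast,
      toReal_isoperimetricConst_pow (by lia)]
  calc nrmq N q u ^ q
    _ ≤ nrm1 N u ^ (q - (q - 1) * N) * (tv N u / κ) ^ ((q - 1) * N) :=
        (nrmq_rpow_le hN hq1 hq2 hu).trans <| mul_le_mul_of_nonneg_left
          (Real.rpow_le_rpow ENNReal.toReal_nonneg (toReal_eLpNorm_conjExponent_le hN hu)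
            (mul_nonneg (by linarith) N.cast_nonneg)) (by positivity)
    _ = (1 / (N ^ (N - 1) * omegaS N)) ^ (q - 1) *
          (nrm1 N u ^ (q - (q - 1) * N) * tv N u ^ ((q - 1) * N)) := by
        rw [Real.div_rpow tv_nonneg κ_nonneg, κ_rpow, one_div, Real.inv_rpow (by positivity)]
        ring

end BestConstant

section Extremal

variable {N : ℕ}

lemma toReal_eLpNorm_indicator_one {α : Type*} [MeasurableSpace α] {μ : Measure α} {A : Set α}
    (hA : MeasurableSet A) {q : ℝ} (hq : 0 < q) :
    (eLpNorm (A.indicator (1 : α → ℝ)) (ENNReal.ofReal q) μ).toReal = μ.real A ^ q⁻¹ := by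
  have := eLpNorm_indicator_const (μ := μ) (c := (1 : ℝ)) hA
    (ENNReal.ofReal_pos.2 hq).ne' ENNReal.ofReal_ne_top
  rw [ENNReal.toReal_ofReal hq.le, enorm_one, one_mul, one_div] at this
  rw [measureReal_def, ENNReal.toReal_rpow, ← this]
  rfl

lemma memBV_indicator_closedBall : MemBV N ((Metric.closedBall 0 1).indicator 1) :=
  ⟨(integrable_indicator_iff measurableSet_closedBall).2
    (integrableOn_const measure_closedBall_lt_top.ne), _, omegaS_mem_upperBounds_TVSet⟩

lemma tv_indicator_closedBall (hN : 2 ≤ N) :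
    tv N ((Metric.closedBall 0 1).indicator 1) = omegaS N := by
  refine (csSup_le ⟨0, zero_mem_TVSet _⟩ omegaS_mem_upperBounds_TVSet).antisymm ?_
  have hN1 : (1 : ℝ) < N := Nat.one_lt_cast.2 hN
  have conj := Real.HolderConjugate.conjExponent hN1
  have V_pos : 0 < volume.real (Metric.ball (0 : Euc N) 1) := volume_real_unitBall_pos N
  have sobolev := toReal_eLpNorm_conjExponent_le hN (memBV_indicator_closedBall (N := N))
  rw [toReal_eLpNorm_indicator_one measurableSet_closedBall conj.symm.pos,
    Measure.addHaar_real_closedBall _ _ zero_le_one, one_pow, one_mul, le_div_iff₀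
    (ENNReal.toReal_pos (isoperimetricConst_euc_ne_zero (by lia)) (isoperimetricConst_ne_top _)),
    isoperimetricConst, finrank_euclideanSpace_fin, ENNReal.toReal_mul, ENNReal.toReal_natCast,
    ← ENNReal.toReal_rpow, ← measureReal_def, mul_left_comm, ← Real.rpow_add V_pos,
    conj.symm.inv_add_inv_eq_one, Real.rpow_one] at sobolev
  exact sobolev

lemma ratioQ_indicator_closedBall (hN : 2 ≤ N) {q : ℝ} (hq : 0 < q) :
    ratioQ N q ((Metric.closedBall 0 1).indicator 1) =
      (1 / ((N : ℝ) ^ (N - 1) * omegaS N)) ^ (q - 1) := by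
  have ω_pos : 0 < omegaS N := omegaS_pos (by lia)
  set V := volume.real (Metric.ball (0 : Euc N) 1)
  have V_pos : 0 < V := volume_real_unitBall_pos N
  have closedBall_eq : volume.real (Metric.closedBall (0 : Euc N) 1) = V := by
    rw [Measure.addHaar_real_closedBall _ _ zero_le_one, one_pow, one_mul]
  have nrmq_rpow : nrmq N q ((Metric.closedBall 0 1).indicator 1) ^ q = V := by
    rw [nrmq, toReal_eLpNorm_indicator_one measurableSet_closedBall hq, closedBall_eq,
      Real.rpow_inv_rpow V_pos.le hq.ne']
  have nrm1_eq : nrm1 N ((Metric.closedBall 0 1).indicator 1) = V := by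
    rw [nrm1, ← ENNReal.ofReal_one, toReal_eLpNorm_indicator_one measurableSet_closedBall one_pos,
      closedBall_eq, inv_one, Real.rpow_one]
  have ω_pow : omegaS N ^ N = V ^ (N - 1) * (N ^ (N - 1) * omegaS N) := by
    rw [← mul_assoc, ← mul_pow, mul_comm V, ← pow_sub_one_mul (by lia) (omegaS N)]
    rfl
  have ω_rpow : omegaS N ^ ((q - 1) * N) =
      V ^ ((q - 1) * (N - 1)) * (N ^ (N - 1) * omegaS N) ^ (q - 1) := by
    rw [mul_comm, Real.rpow_mul ω_pos.le, Real.rpow_natCast, ω_pow,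
      Real.mul_rpow (by positivity) (by positivity), ← Real.rpow_natCast V,
      ← Real.rpow_mul V_pos.le, Nat.cast_pred (by lia), mul_comm (q - 1)]
  rw [ratioQ, nrmq_rpow, nrm1_eq, tv_indicator_closedBall hN, ω_rpow, ← mul_assoc,
    ← Real.rpow_add V_pos, show q - (q - 1) * N + (q - 1) * (N - 1) = 1 by ring, Real.rpow_one,
    div_mul_cancel_left₀ V_pos.ne', one_div, Real.inv_rpow (by positivity)]

end Extremal

/-- For `N ≥ 2` and `1 < q ≤ N/(N-1)`, the best constant `E_q`
equals `(1/(N^{N-1} ω_{N-1}))^{q-1}`. -/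
theorem best_constant_Eq (N : ℕ) (hN : 2 ≤ N) (q : ℝ) (hq1 : 1 < q)
    (hq2 : q ≤ (N : ℝ) / ((N : ℝ) - 1)) :
    EqSup N q = (1 / ((N : ℝ) ^ (N - 1) * omegaS N)) ^ (q - 1) := by
  let u₀ : Euc N → ℝ := (Metric.closedBall 0 1).indicator 1
  have u₀_ne_zero : u₀ ≠ 0 := fun h => by simpa [u₀] using congrFun h 0
  have ratioQ_u₀ : ratioQ N q u₀ = (1 / ((N : ℝ) ^ (N - 1) * omegaS N)) ^ (q - 1) :=
    ratioQ_indicator_closedBall hN (one_pos.trans hq1)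
  refine IsGreatest.csSup_eq ⟨⟨u₀, memBV_indicator_closedBall, u₀_ne_zero, ratioQ_u₀.symm⟩, ?_⟩
  rintro _ ⟨u, hu, -, rfl⟩
  exact ratioQ_le hN hq1.le hq2 hu
end
end

section
/- For N ≥ 2 and 1 < q ≤ N/(N-1), the constant Ẽ_q := sup over nonzero u in W^{1,1}(ℝ^N) of ‖u‖_q^q / (‖u‖_1^{q-(q-1)N} ‖∇u‖_1^{(q-1)N}) is not attained by any nonzero u ∈ W^{1,1}(ℝ^N). -/
open MeasureTheory Real Filter Topology

noncomputable section

/-- `u ∈ W^{1,1}(ℝ^N)` with weak gradient `v`. -/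
def MemW11 (N : ℕ) (u : Euc N → ℝ) (v : Euc N → Euc N) : Prop :=
  Integrable u ∧ Integrable v ∧
    ∀ ψ : Euc N → ℝ, ContDiff ℝ 1 ψ → HasCompactSupport ψ → ∀ i : Fin N,
      ∫ x, u x * fderiv ℝ ψ x (EuclideanSpace.single i 1) = - ∫ x, v x i * ψ x

/-- The Gagliardo–Nirenberg ratio on `W^{1,1}`, with `‖∇u‖_1` in place of `‖u‖_{TV}`. -/
def ratioQW (N : ℕ) (q : ℝ) (u : Euc N → ℝ) (v : Euc N → Euc N) : ℝ :=
  nrmq N q u ^ q /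
    (nrm1 N u ^ (q - (q-1)*N) * ((eLpNorm v 1 volume).toReal) ^ ((q-1)*(N:ℝ)))

/-- The best constant `Ẽ_q` on `W^{1,1}(ℝ^N)`. -/
def EqSupW (N : ℕ) (q : ℝ) : ℝ :=
  sSup { r | ∃ u : Euc N → ℝ, ∃ v : Euc N → Euc N,
      MemW11 N u v ∧ u ≠ 0 ∧ r = ratioQW N q u v }

/-! Split `u = Φ(u) + (u - Φ(u))`, where `Φ` is smooth with `0 < Φ' ≤ 1` and `Φ 0 = 0`. The `L¹`
norms of the two pieces add up to that of `u`, and likewise for the gradients. If `u` attains `Ẽ_q`,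
then the sharp Gagliardo–Nirenberg inequality for each piece and the weighted AM-GM inequality give
`‖Φ(u)‖_q ≤ l ‖u‖_q` and `‖u - Φ(u)‖_q ≤ (1 - l) ‖u‖_q` for some `l`. Since `t ↦ t ^ q` is strictly
convex, `|Φ(u)| = l |u|` almost everywhere. Characteristic functions satisfy such a relation, but
for `Φ(t) = t / √(1 + t²)` and `u ∈ W^{1,1}`, comparing gradients forces `u = 0` or `∇u = 0`. -/

section IntegralLemmas

variable {X : Type*} [MeasurableSpace X] {μ : Measure X}

/-- As in the Brezis–Lieb lemma, `‖f n - g‖ - ‖f n‖ + ‖g‖` is dominated by `2 * ‖g‖`. -/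
lemma tendsto_integral_norm_sub_of_integral_norm_le {F : Type*} [NormedAddCommGroup F]
    {f : ℕ → X → F} {g : X → F} (hf : ∀ n, Integrable (f n) μ) (hg : Integrable g μ)
    (hfg : ∀ᵐ x ∂μ, Tendsto (fun n => f n x) atTop (𝓝 (g x)))
    (hle : ∀ n, ∫ x, ‖f n x‖ ∂μ ≤ ∫ x, ‖g x‖ ∂μ) :
    Tendsto (fun n => ∫ x, ‖f n x - g x‖ ∂μ) atTop (𝓝 0) := by
  have hdist : ∀ n, Integrable (fun x => ‖f n x - g x‖) μ := fun n => ((hf n).sub hg).norm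
  have hsub : ∀ n, Integrable (fun x => ‖f n x - g x‖ - ‖f n x‖) μ := fun n =>
    (hdist n).sub (hf n).norm
  have hlim : Tendsto (fun n => ∫ x, (‖f n x - g x‖ - ‖f n x‖ + ‖g x‖) ∂μ) atTop
      (𝓝 (∫ _, (0 : ℝ) ∂μ)) := by
    refine tendsto_integral_of_dominated_convergence (fun x => 2 * ‖g x‖)
      (fun n => ((hsub n).add hg.norm).aestronglyMeasurable) (hg.norm.const_mul 2)
      (fun n => .of_forall fun x => ?_) ?_
    · rw [Real.norm_eq_abs, abs_le]
      constructor <;>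
        linarith [norm_sub_le (f n x) (g x), norm_sub_norm_le (f n x) (g x), norm_nonneg (g x)]
    · filter_upwards [hfg] with x hx
      simpa using ((hx.sub_const (g x)).norm.sub hx.norm).add_const ‖g x‖
  rw [integral_zero] at hlim
  refine squeeze_zero (fun n => integral_nonneg fun x => norm_nonneg _) (fun n => ?_) hlim
  rw [integral_add (hsub n) hg.norm, integral_sub (hdist n) (hf n).norm]
  linarith [hle n]

lemma tendsto_integral_mul_of_tendsto_integral_norm_sub {f : ℕ → X → ℝ} {g ψ : X → ℝ} {K : ℝ}
    (hf : ∀ n, Integrable (f n) μ) (hg : Integrable g μ) (hψ : AEStronglyMeasurable ψ μ)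
    (hK : ∀ x, ‖ψ x‖ ≤ K) (hfg : Tendsto (fun n => ∫ x, ‖f n x - g x‖ ∂μ) atTop (𝓝 0)) :
    Tendsto (fun n => ∫ x, f n x * ψ x ∂μ) atTop (𝓝 (∫ x, g x * ψ x ∂μ)) := by
  have hmul : ∀ {h : X → ℝ}, Integrable h μ → Integrable (fun x => h x * ψ x) μ := fun hh =>
    hh.mul_bdd hψ (.of_forall hK)
  have hbound : ∀ n, ‖∫ x, f n x * ψ x ∂μ - ∫ x, g x * ψ x ∂μ‖ ≤ (∫ x, ‖f n x - g x‖ ∂μ) * K := by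
    intro n
    rw [← integral_sub (hmul (hf n)) (hmul hg), ← integral_mul_const]
    refine norm_integral_le_of_norm_le (((hf n).sub hg).norm.mul_const K) (.of_forall fun x => ?_)
    rw [← sub_mul, norm_mul]
    gcongr
    exact hK x
  rw [tendsto_iff_norm_sub_tendsto_zero]
  exact squeeze_zero (fun n => norm_nonneg _) hbound (by simpa using hfg.mul_const K)

lemma ae_eq_of_integral_convexComb_le {s : Set ℝ} {φ : ℝ → ℝ} (hφ : StrictConvexOn ℝ s φ)
    {f g : X → ℝ} (hf : ∀ x, f x ∈ s) (hg : ∀ x, g x ∈ s) {a b : ℝ} (ha : 0 < a) (hb : 0 < b)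
    (hab : a + b = 1) (hfi : Integrable (fun x => φ (f x)) μ)
    (hgi : Integrable (fun x => φ (g x)) μ) (hi : Integrable (fun x => φ (a * f x + b * g x)) μ)
    (hle : a * ∫ x, φ (f x) ∂μ + b * ∫ x, φ (g x) ∂μ ≤ ∫ x, φ (a * f x + b * g x) ∂μ) :
    f =ᵐ[μ] g := by
  have hcomb : Integrable (fun x => a * φ (f x) + b * φ (g x)) μ :=
    (hfi.const_mul a).add (hgi.const_mul b)
  have hgap_nonneg : ∀ x, 0 ≤ a * φ (f x) + b * φ (g x) - φ (a * f x + b * g x) := fun x =>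
    sub_nonneg.2 (hφ.convexOn.2 (hf x) (hg x) ha.le hb.le hab)
  have hgap_integral : ∫ x, (a * φ (f x) + b * φ (g x) - φ (a * f x + b * g x)) ∂μ = 0 := by
    refine le_antisymm ?_ (integral_nonneg hgap_nonneg)
    rw [integral_sub hcomb hi, integral_add (hfi.const_mul a) (hgi.const_mul b),
      integral_const_mul, integral_const_mul]
    linarith
  filter_upwards [(integral_eq_zero_iff_of_nonneg hgap_nonneg (hcomb.sub hi)).1 hgap_integral]
    with x hx
  by_contra hne
  exact (sub_pos.2 (hφ.2 (hf x) (hg x) hne ha hb hab)).ne' hx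

lemma ae_eq_zero_of_integral_rpow_le_zero {q : ℝ} (hq : 0 < q) {f : X → ℝ} (hf : ∀ x, 0 ≤ f x)
    (hfi : Integrable (fun x => f x ^ q) μ) (hle : ∫ x, f x ^ q ∂μ ≤ 0) : f =ᵐ[μ] 0 := by
  have hnonneg : ∀ x, 0 ≤ f x ^ q := fun x => Real.rpow_nonneg (hf x) q
  filter_upwards [(integral_eq_zero_iff_of_nonneg hnonneg hfi).1
    (le_antisymm hle (integral_nonneg hnonneg))] with x hx
  exact (Real.rpow_eq_zero (hf x) hq.ne').1 hx

lemma ae_eq_mul_add_of_integral_rpow_le {q : ℝ} (hq : 1 < q) {f g : X → ℝ} (hf : ∀ x, 0 ≤ f x)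
    (hg : ∀ x, 0 ≤ g x) (hfi : Integrable (fun x => f x ^ q) μ)
    (hgi : Integrable (fun x => g x ^ q) μ) (hi : Integrable (fun x => (f x + g x) ^ q) μ)
    {l m : ℝ} (hl : 0 ≤ l) (hm : 0 ≤ m) (hlm : l + m = 1)
    (hfle : ∫ x, f x ^ q ∂μ ≤ l ^ q * ∫ x, (f x + g x) ^ q ∂μ)
    (hgle : ∫ x, g x ^ q ∂μ ≤ m ^ q * ∫ x, (f x + g x) ^ q ∂μ) :
    ∀ᵐ x ∂μ, f x = l * (f x + g x) := by
  have hq0 : 0 < q := one_pos.trans hq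
  rcases hl.eq_or_lt with rfl | hl
  · rw [Real.zero_rpow hq0.ne', zero_mul] at hfle
    filter_upwards [ae_eq_zero_of_integral_rpow_le_zero hq0 hf hfi hfle] with x hx
    simpa using hx
  rcases hm.eq_or_lt with rfl | hm
  · rw [Real.zero_rpow hq0.ne', zero_mul] at hgle
    filter_upwards [ae_eq_zero_of_integral_rpow_le_zero hq0 hg hgi hgle] with x hx
    simp [show l = 1 by linarith, show g x = 0 from hx]
  have hdiv : ∀ {h : X → ℝ} {c : ℝ}, (∀ x, 0 ≤ h x) → 0 < c →
      (fun x => (h x / c) ^ q) = fun x => h x ^ q / c ^ q := fun hh hc =>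
    funext fun x => Real.div_rpow (hh x) hc.le q
  have hcomb : ∀ x, l * (f x / l) + m * (g x / m) = f x + g x := fun x => by field_simp
  have hfl : ∫ x, (f x / l) ^ q ∂μ ≤ ∫ x, (f x + g x) ^ q ∂μ := by
    rwa [hdiv hf hl, integral_div, div_le_iff₀' (Real.rpow_pos_of_pos hl q)]
  have hgm : ∫ x, (g x / m) ^ q ∂μ ≤ ∫ x, (f x + g x) ^ q ∂μ := by
    rwa [hdiv hg hm, integral_div, div_le_iff₀' (Real.rpow_pos_of_pos hm q)]
  have heq : (fun x => f x / l) =ᵐ[μ] fun x => g x / m := by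
    refine ae_eq_of_integral_convexComb_le (strictConvexOn_rpow hq)
      (fun x => div_nonneg (hf x) hl.le) (fun x => div_nonneg (hg x) hm.le) hl hm hlm
      (by rw [hdiv hf hl]; exact hfi.div_const _) (by rw [hdiv hg hm]; exact hgi.div_const _)
      (by simpa only [hcomb] using hi) ?_
    simp only [hcomb]
    calc l * ∫ x, (f x / l) ^ q ∂μ + m * ∫ x, (g x / m) ^ q ∂μ
        ≤ l * ∫ x, (f x + g x) ^ q ∂μ + m * ∫ x, (f x + g x) ^ q ∂μ := by gcongr
      _ = ∫ x, (f x + g x) ^ q ∂μ := by rw [← add_mul, hlm, one_mul]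
  filter_upwards [heq] with x hx
  rw [div_eq_div_iff hl.ne' hm.ne'] at hx
  linear_combination hx + f x * hlm.symm

lemma eLpNorm_rpow_le_eLpNorm_rpow_mul_eLpNorm_rpow {F : Type*} [NormedAddCommGroup F]
    {f : X → F} (hf : AEStronglyMeasurable f μ) {p q a b : ℝ} (hp : 0 < p) (hq : 0 < q)
    (ha : 0 ≤ a) (hb : 0 ≤ b) (hab : a + b = 1) (habq : a + b * p = q) :
    eLpNorm f (ENNReal.ofReal q) μ ^ q ≤
      eLpNorm f 1 μ ^ a * eLpNorm f (ENNReal.ofReal p) μ ^ (b * p) := by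
  have hpow : ∀ {r : ℝ}, 0 < r →
      eLpNorm f (ENNReal.ofReal r) μ ^ r = ∫⁻ x, ‖f x‖ₑ ^ r ∂μ := fun {r} hr => by
    simpa only [Real.coe_toNNReal r hr.le] using!
      eLpNorm_nnreal_pow_eq_lintegral (f := f) (μ := μ) (p := r.toNNReal) (by simpa using hr)
  calc eLpNorm f (ENNReal.ofReal q) μ ^ q
      = ∫⁻ x, ‖f x‖ₑ ^ a * (‖f x‖ₑ ^ p) ^ b ∂μ := by
        rw [hpow hq]
        congr 1; ext x
        rw [← ENNReal.rpow_mul, ← ENNReal.rpow_add_of_nonneg _ _ ha (by positivity), mul_comm p,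
          habq]
    _ ≤ (∫⁻ x, ‖f x‖ₑ ∂μ) ^ a * (∫⁻ x, ‖f x‖ₑ ^ p ∂μ) ^ b :=
        ENNReal.lintegral_mul_norm_pow_le hf.enorm (hf.enorm.pow_const p) ha hb hab
    _ = eLpNorm f 1 μ ^ a * eLpNorm f (ENNReal.ofReal p) μ ^ (b * p) := by
        rw [eLpNorm_one_eq_lintegral_enorm, mul_comm b, ENNReal.rpow_mul, hpow hp]

lemma exists_weights_integral_norm {F : Type*} [NormedAddCommGroup F] {f f₁ f₂ : X → F}
    (h₁ : Integrable f₁ μ) (h₂ : Integrable f₂ μ) (hf : ∀ x, ‖f₁ x‖ + ‖f₂ x‖ = ‖f x‖)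
    (hpos : 0 < ∫ x, ‖f x‖ ∂μ) :
    ∃ a b : ℝ, 0 ≤ a ∧ 0 ≤ b ∧ a + b = 1 ∧ ∫ x, ‖f₁ x‖ ∂μ = a * ∫ x, ‖f x‖ ∂μ ∧
      ∫ x, ‖f₂ x‖ ∂μ = b * ∫ x, ‖f x‖ ∂μ := by
  have hsum : ∫ x, ‖f x‖ ∂μ = ∫ x, ‖f₁ x‖ ∂μ + ∫ x, ‖f₂ x‖ ∂μ := by
    simp only [← hf, integral_add h₁.norm h₂.norm]
  refine ⟨(∫ x, ‖f₁ x‖ ∂μ) / ∫ x, ‖f x‖ ∂μ, (∫ x, ‖f₂ x‖ ∂μ) / ∫ x, ‖f x‖ ∂μ, by positivity,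
    by positivity, ?_, (div_mul_cancel₀ _ hpos.ne').symm, (div_mul_cancel₀ _ hpos.ne').symm⟩
  rw [← add_div, ← hsum, div_self hpos.ne']

end IntegralLemmas

lemma rpow_mul_rpow_le_arith_mean_rpow {x y α β : ℝ} (hx : 0 ≤ x) (hy : 0 ≤ y) (hα : 0 ≤ α)
    (hβ : 0 ≤ β) (hαβ : 0 < α + β) :
    x ^ α * y ^ β ≤ ((α * x + β * y) / (α + β)) ^ (α + β) := by
  have hroot : ∀ {z γ : ℝ}, 0 ≤ z → (z ^ (γ / (α + β))) ^ (α + β) = z ^ γ := fun hz => by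
    rw [← Real.rpow_mul hz, div_mul_cancel₀ _ hαβ.ne']
  calc x ^ α * y ^ β
      = (x ^ (α / (α + β)) * y ^ (β / (α + β))) ^ (α + β) := by
        rw [Real.mul_rpow (by positivity) (by positivity), hroot hx, hroot hy]
    _ ≤ (α / (α + β) * x + β / (α + β) * y) ^ (α + β) := by
        gcongr
        exact Real.geom_mean_le_arith_mean2_weighted (by positivity) (by positivity) hx hy
          (by field_simp)
    _ = ((α * x + β * y) / (α + β)) ^ (α + β) := by congr 1; field_simp

section Mollification

open scoped Convolution

variable {E : Type*} [NormedAddCommGroup E] [NormedSpace ℝ E] [HasContDiffBump E]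
  {F : Type*} [NormedAddCommGroup F] [NormedSpace ℝ F]

/-- The bump function around the origin with radii `1 / (n + 1)` and `2 / (n + 1)`, whose
normalization is the `n`-th mollifier. -/
def mollifierBump (E : Type*) [NormedAddCommGroup E] (n : ℕ) : ContDiffBump (0 : E) where
  rIn := 1 / ((n : ℝ) + 1)
  rOut := 2 / ((n : ℝ) + 1)
  rIn_pos := by positivity
  rIn_lt_rOut := by gcongr; norm_num

/-- The bump function equal to `1` on the unit ball and supported in the ball of radius `2`. -/
def unitBump (E : Type*) [NormedAddCommGroup E] : ContDiffBump (0 : E) :=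
  ⟨1, 2, one_pos, one_lt_two⟩

/-- The cutoff function equal to `1` on the ball of radius `n + 1`, obtained by dilating
`unitBump`. -/
def cutoff (n : ℕ) (x : E) : ℝ := unitBump E (((n : ℝ) + 1)⁻¹ • x)

lemma cutoff_nonneg (n : ℕ) (x : E) : 0 ≤ cutoff n x := (unitBump E).nonneg

lemma cutoff_le_one (n : ℕ) (x : E) : cutoff n x ≤ 1 := (unitBump E).le_one

lemma norm_cutoff_smul_le (n : ℕ) (x : E) (y : F) : ‖cutoff n x • y‖ ≤ ‖y‖ := by
  rw [norm_smul, Real.norm_of_nonneg (cutoff_nonneg n x)]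
  exact mul_le_of_le_one_left (norm_nonneg y) (cutoff_le_one n x)

lemma contDiff_cutoff (n : ℕ) : ContDiff ℝ 1 (cutoff n : E → ℝ) :=
  (unitBump E).contDiff.comp (contDiff_const_smul _)

lemma hasCompactSupport_cutoff [FiniteDimensional ℝ E] (n : ℕ) :
    HasCompactSupport (cutoff n : E → ℝ) :=
  (unitBump E).hasCompactSupport.comp_smul (by positivity)

lemma tendsto_cutoff (x : E) : Tendsto (fun n => cutoff n x) atTop (𝓝 1) := by
  have hscale : Tendsto (fun n : ℕ => ((n : ℝ) + 1)⁻¹ • x) atTop (𝓝 0) := by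
    simpa using (tendsto_one_div_add_atTop_nhds_zero_nat (𝕜 := ℝ)).smul_const x
  have hzero : unitBump E 0 = 1 :=
    (unitBump E).one_of_mem_closedBall (Metric.mem_closedBall_self zero_le_one)
  simpa only [hzero] using! ((unitBump E).continuous.tendsto 0).comp hscale

lemma exists_norm_fderiv_cutoff_le [FiniteDimensional ℝ E] :
    ∃ M, ∀ n (x : E), ‖fderiv ℝ (cutoff n) x‖ ≤ ((n : ℝ) + 1)⁻¹ * M := by
  have hcont : ContDiff ℝ 1 (unitBump E) := (unitBump E).contDiff
  obtain ⟨M, hM⟩ := ((unitBump E).hasCompactSupport.fderiv ℝ).exists_bound_of_continuous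
    (hcont.continuous_fderiv one_ne_zero)
  refine ⟨M, fun n x => ?_⟩
  rw [show (cutoff n : E → ℝ) = fun x => unitBump E (((n : ℝ) + 1)⁻¹ • x) from rfl,
    fderiv_comp_smul, norm_smul, Real.norm_of_nonneg (by positivity)]
  gcongr
  exact hM _

lemma integrable_cutoff_smul [MeasurableSpace E] [BorelSpace E] {μ : Measure E} {f : E → F}
    (hf : Integrable f μ) (n : ℕ) : Integrable (fun x => cutoff n x • f x) μ :=
  hf.mono ((contDiff_cutoff n).continuous.aestronglyMeasurable.smul hf.aestronglyMeasurable)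
    (.of_forall fun x => norm_cutoff_smul_le n x (f x))

variable [MeasurableSpace E] [BorelSpace E] [FiniteDimensional ℝ E] {μ : Measure E}
  [μ.IsAddHaarMeasure] {f : E → F}

/-- The mollification of `f` at scale `1 / (n + 1)`. -/
def mollify (μ : Measure E) (n : ℕ) (f : E → F) : E → F :=
  (mollifierBump E n).normed μ ⋆[ContinuousLinearMap.lsmul ℝ ℝ, μ] f

lemma ae_tendsto_mollify [CompleteSpace F] (hf : LocallyIntegrable f μ) :
    ∀ᵐ x ∂μ, Tendsto (fun n => mollify μ n f x) atTop (𝓝 (f x)) := by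
  refine ContDiffBump.ae_convolution_tendsto_right_of_locallyIntegrable (K := 2)
    (φ := mollifierBump E) ?_ (.of_forall fun n => le_of_eq ?_) hf
  · simpa [mollifierBump, div_eq_mul_inv] using
      (tendsto_one_div_add_atTop_nhds_zero_nat (𝕜 := ℝ)).const_mul 2
  · simp only [mollifierBump]
    ring

lemma integrable_mollify (hf : Integrable f μ) (n : ℕ) : Integrable (mollify μ n f) μ :=
  (mollifierBump E n).integrable_normed.integrable_convolution _ hf

lemma integral_norm_mollify_le (hf : Integrable f μ) (n : ℕ) :
    ∫ x, ‖mollify μ n f x‖ ∂μ ≤ ∫ x, ‖f x‖ ∂μ := by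
  calc ∫ x, ‖mollify μ n f x‖ ∂μ ≤ ∫ x, mollify μ n (fun y => ‖f y‖) x ∂μ := by
        refine integral_mono (integrable_mollify hf n).norm (integrable_mollify hf.norm n)
          fun x => (norm_integral_le_integral_norm _).trans_eq ?_
        refine integral_congr_ae (.of_forall fun t => ?_)
        simp [norm_smul, abs_of_nonneg ((mollifierBump E n).nonneg_normed t)]
    _ = ∫ x, ‖f x‖ ∂μ := by
        unfold mollify
        rw [integral_convolution _ (mollifierBump E n).integrable_normed hf.norm]
        simp [ContDiffBump.integral_normed]

lemma contDiff_mollify (hf : LocallyIntegrable f μ) (n : ℕ) : ContDiff ℝ 1 (mollify μ n f) :=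
  HasCompactSupport.contDiff_convolution_left _ (mollifierBump E n).hasCompactSupport_normed
    (mollifierBump E n).contDiff_normed hf

lemma tendsto_integral_norm_cutoff_smul_mollify_sub [CompleteSpace F] (hf : Integrable f μ) :
    Tendsto (fun n => ∫ x, ‖cutoff n x • mollify μ n f x - f x‖ ∂μ) atTop (𝓝 0) := by
  refine tendsto_integral_norm_sub_of_integral_norm_le
    (fun n => integrable_cutoff_smul (integrable_mollify hf n) n) hf ?_ fun n => ?_
  · filter_upwards [ae_tendsto_mollify hf.locallyIntegrable] with x hx
    simpa using (tendsto_cutoff x).smul hx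
  · refine (integral_mono (integrable_cutoff_smul (integrable_mollify hf n) n).norm
      (integrable_mollify hf n).norm fun x => norm_cutoff_smul_le n x _).trans ?_
    exact integral_norm_mollify_le hf n

end Mollification

lemma norm_gradient {E : Type*} [NormedAddCommGroup E] [InnerProductSpace ℝ E] [CompleteSpace E]
    (f : E → ℝ) (x : E) : ‖gradient f x‖ = ‖fderiv ℝ f x‖ :=
  (InnerProductSpace.toDual ℝ E).symm.norm_map _

lemma hasGradientAt_mul {E : Type*} [NormedAddCommGroup E] [InnerProductSpace ℝ E]
    [CompleteSpace E] {f g : E → ℝ} {f' g' x : E} (hf : HasGradientAt f f' x)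
    (hg : HasGradientAt g g' x) :
    HasGradientAt (fun y => f y * g y) (f x • g' + g x • f') x := by
  rw [hasGradientAt_iff_hasFDerivAt] at *
  simpa using! hf.mul hg

lemma hasGradientAt_comp {E : Type*} [NormedAddCommGroup E] [InnerProductSpace ℝ E]
    [CompleteSpace E] {Φ : ℝ → ℝ} {c : ℝ} {f : E → ℝ} {f' x : E} (hΦ : HasDerivAt Φ c (f x))
    (hf : HasGradientAt f f' x) : HasGradientAt (fun y => Φ (f y)) (c • f') x := by
  rw [hasGradientAt_iff_hasFDerivAt] at *
  simpa using! hΦ.comp_hasFDerivAt x hf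

lemma integrable_gradient {E : Type*} [NormedAddCommGroup E] [InnerProductSpace ℝ E]
    [FiniteDimensional ℝ E] [MeasurableSpace E] [BorelSpace E] {μ : Measure E}
    [IsFiniteMeasureOnCompacts μ] {f : E → ℝ} (hf : ContDiff ℝ 1 f) (hc : HasCompactSupport f) :
    Integrable (gradient f) μ :=
  ((InnerProductSpace.toDual ℝ E).symm.continuous.comp
    (hf.continuous_fderiv one_ne_zero)).integrable_of_hasCompactSupport
    ((hc.fderiv ℝ).comp_left (map_zero _))

lemma fderiv_apply_single_eq_gradient {N : ℕ} {f : Euc N → ℝ} {g x : Euc N}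
    (h : HasGradientAt f g x) (i : Fin N) :
    fderiv ℝ f x (EuclideanSpace.single i 1) = g i := by
  rw [h.hasFDerivAt.fderiv, InnerProductSpace.toDual_apply_apply]
  simp [EuclideanSpace.inner_single_right]

lemma integrable_coord {N : ℕ} {v : Euc N → Euc N} (hv : Integrable v) (i : Fin N) :
    Integrable (fun x => v x i) :=
  (EuclideanSpace.proj (𝕜 := ℝ) i : Euc N →L[ℝ] ℝ).integrable_comp hv

namespace MemW11

variable {N : ℕ} {u u' : Euc N → ℝ} {v v' : Euc N → Euc N} {ψ : Euc N → ℝ}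

lemma of_hasGradientAt (hgrad : ∀ x, HasGradientAt u (v x) x) (hu : Integrable u)
    (hv : Integrable v) : MemW11 N u v := by
  refine ⟨hu, hv, fun ψ hψ hc i => ?_⟩
  have hψ' : Continuous fun x => fderiv ℝ ψ x (EuclideanSpace.single i 1) :=
    (hψ.continuous_fderiv one_ne_zero).clm_apply continuous_const
  obtain ⟨A, hA⟩ := hc.exists_bound_of_continuous hψ.continuous
  obtain ⟨B, hB⟩ := (hc.fderiv_apply ℝ (EuclideanSpace.single i 1)).exists_bound_of_continuous hψ'
  have hparts := integral_mul_fderiv_eq_neg_fderiv_mul_of_integrable (μ := volume) (f := u)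
    (g := ψ) (v := EuclideanSpace.single i 1) ?_
    (hu.mul_bdd hψ'.aestronglyMeasurable (.of_forall hB))
    (hu.mul_bdd hψ.continuous.aestronglyMeasurable (.of_forall hA))
    (fun x _ => (hgrad x).hasFDerivAt.differentiableAt)
    (fun x _ => hψ.differentiable one_ne_zero x)
  · simpa only [fderiv_apply_single_eq_gradient (hgrad _)] using hparts
  · simpa only [fderiv_apply_single_eq_gradient (hgrad _)] using
      (integrable_coord hv i).mul_bdd hψ.continuous.aestronglyMeasurable (.of_forall hA)

lemma gradient_ae_unique (h : MemW11 N u v) (h' : MemW11 N u' v') (huu' : u =ᵐ[volume] u') :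
    v =ᵐ[volume] v' := by
  have hcoord : ∀ i, (fun x => v x i) =ᵐ[volume] fun x => v' x i := fun i => by
    refine ae_eq_of_integral_contDiff_smul_eq (integrable_coord h.2.1 i).locallyIntegrable
      (integrable_coord h'.2.1 i).locallyIntegrable fun ψ hψ hc => ?_
    have hψ1 : ContDiff ℝ 1 ψ := hψ.of_le (by simp)
    simp only [smul_eq_mul, mul_comm (ψ _)]
    rw [← neg_inj, ← h.2.2 ψ hψ1 hc i, ← h'.2.2 ψ hψ1 hc i]
    refine integral_congr_ae ?_
    filter_upwards [huu'] with x hx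
    rw [hx]
  filter_upwards [ae_all_iff.2 hcoord] with x hx
  ext i
  exact hx i

lemma of_tendsto {w : ℕ → Euc N → ℝ} {z : ℕ → Euc N → Euc N} (h : ∀ n, MemW11 N (w n) (z n))
    (hu : Integrable u) (hv : Integrable v)
    (hwu : Tendsto (fun n => ∫ x, ‖w n x - u x‖) atTop (𝓝 0))
    (hzv : Tendsto (fun n => ∫ x, ‖z n x - v x‖) atTop (𝓝 0)) : MemW11 N u v := by
  refine ⟨hu, hv, fun ψ hψ hc i => ?_⟩
  have hψ' : Continuous fun x => fderiv ℝ ψ x (EuclideanSpace.single i 1) :=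
    (hψ.continuous_fderiv one_ne_zero).clm_apply continuous_const
  obtain ⟨A, hA⟩ := hc.exists_bound_of_continuous hψ.continuous
  obtain ⟨B, hB⟩ := (hc.fderiv_apply ℝ (EuclideanSpace.single i 1)).exists_bound_of_continuous hψ'
  have hcoord : Tendsto (fun n => ∫ x, ‖z n x i - v x i‖) atTop (𝓝 0) :=
    squeeze_zero (fun n => integral_nonneg fun x => norm_nonneg _)
      (fun n => integral_mono ((integrable_coord (h n).2.1 i).sub (integrable_coord hv i)).norm
        ((h n).2.1.sub hv).norm fun x => PiLp.norm_apply_le (z n x - v x) i) hzv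
  have hleft := tendsto_integral_mul_of_tendsto_integral_norm_sub (fun n => (h n).1) hu
    hψ'.aestronglyMeasurable hB hwu
  have hright := tendsto_integral_mul_of_tendsto_integral_norm_sub
    (fun n => integrable_coord (h n).2.1 i) (integrable_coord hv i)
    hψ.continuous.aestronglyMeasurable hA hcoord
  refine tendsto_nhds_unique hleft (hright.neg.congr fun n => ?_)
  exact ((h n).2.2 ψ hψ hc i).symm

lemma integral_mul_comp_sub_left (h : MemW11 N u v) (hψ : ContDiff ℝ 1 ψ)
    (hc : HasCompactSupport ψ) (x : Euc N) (i : Fin N) :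
    ∫ t, u t * fderiv ℝ ψ (x - t) (EuclideanSpace.single i 1) = ∫ t, v t i * ψ (x - t) := by
  have hfderiv : ∀ t, fderiv ℝ (fun t => ψ (x - t)) t (EuclideanSpace.single i 1)
      = -fderiv ℝ ψ (x - t) (EuclideanSpace.single i 1) := fun t => by
    have hcomp := (hψ.differentiable one_ne_zero (x - t)).hasFDerivAt.comp t
      ((hasFDerivAt_id t).const_sub x)
    simp [show fderiv ℝ (fun t => ψ (x - t)) t = _ from hcomp.fderiv]
  have hweak := h.2.2 (fun t => ψ (x - t)) (hψ.comp (contDiff_const.sub contDiff_id))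
    (hc.comp_homeomorph (Homeomorph.subLeft x)) i
  simpa only [hfderiv, mul_neg, integral_neg, neg_inj] using hweak

end MemW11

section MollifyGradient

open scoped Convolution

lemma mollify_apply_coord {N : ℕ} {v : Euc N → Euc N} (hv : LocallyIntegrable v) (n : ℕ)
    (x : Euc N) (i : Fin N) :
    mollify volume n v x i = ∫ t, v t i * (mollifierBump (Euc N) n).normed volume (x - t) := by
  set ρ := (mollifierBump (Euc N) n).normed (volume : Measure (Euc N))
  have hexists : ConvolutionExistsAt ρ v x (ContinuousLinearMap.lsmul ℝ ℝ) volume :=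
    (mollifierBump (Euc N) n).hasCompactSupport_normed.convolutionExists_left _
      (mollifierBump (Euc N) n).continuous_normed hv x
  calc mollify volume n v x i = ∫ t, ρ t * v (x - t) i := by
        simpa [mollify, convolution] using
          ((EuclideanSpace.proj (𝕜 := ℝ) i : Euc N →L[ℝ] ℝ).integral_comp_comm hexists).symm
    _ = ∫ t, v t i * ρ (x - t) := by
        rw [← integral_sub_left_eq_self _ volume x]
        simp [mul_comm]

lemma fderiv_mollify_apply {E : Type*} [NormedAddCommGroup E] [NormedSpace ℝ E]
    [HasContDiffBump E] [MeasurableSpace E] [BorelSpace E] [FiniteDimensional ℝ E]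
    {μ : Measure E} [μ.IsAddHaarMeasure] {u : E → ℝ} (hu : LocallyIntegrable u μ) (n : ℕ)
    (x e : E) :
    fderiv ℝ (mollify μ n u) x e
      = ∫ t, u t * fderiv ℝ ((mollifierBump E n).normed μ) (x - t) e ∂μ := by
  have hρc := (mollifierBump E n).hasCompactSupport_normed (μ := μ)
  have hρ : ContDiff ℝ 1 ((mollifierBump E n).normed μ) := (mollifierBump E n).contDiff_normed
  have hexists : ConvolutionExistsAt (fderiv ℝ ((mollifierBump E n).normed μ)) u x
      ((ContinuousLinearMap.lsmul ℝ ℝ : ℝ →L[ℝ] ℝ →L[ℝ] ℝ).precompL E) μ :=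
    (hρc.fderiv ℝ).convolutionExists_left _ (hρ.continuous_fderiv one_ne_zero) hu x
  rw [mollify, (hρc.hasFDerivAt_convolution_left _ hρ hu x).fderiv, convolution,
    ContinuousLinearMap.integral_apply hexists, ← integral_sub_left_eq_self _ μ x]
  simp [ContinuousLinearMap.precompL_apply, mul_comm]

end MollifyGradient

namespace MemW11

variable {N : ℕ} {u : Euc N → ℝ} {v : Euc N → Euc N}

lemma hasGradientAt_mollify (h : MemW11 N u v) (n : ℕ) (x : Euc N) :
    HasGradientAt (mollify volume n u) (mollify volume n v x) x := by
  have hdiff : DifferentiableAt ℝ (mollify volume n u) x :=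
    (contDiff_mollify h.1.locallyIntegrable n).differentiable one_ne_zero x
  have hgrad : gradient (mollify volume n u) x = mollify volume n v x := by
    ext i
    rw [← fderiv_apply_single_eq_gradient hdiff.hasGradientAt i,
      fderiv_mollify_apply h.1.locallyIntegrable, mollify_apply_coord h.2.1.locallyIntegrable,
      h.integral_mul_comp_sub_left (mollifierBump (Euc N) n).contDiff_normed
        (mollifierBump (Euc N) n).hasCompactSupport_normed]
  exact hgrad ▸ hdiff.hasGradientAt

lemma of_contDiff (hu : ContDiff ℝ 1 u) (hc : HasCompactSupport u) :
    MemW11 N u (gradient u) :=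
  of_hasGradientAt (fun x => (hu.differentiable one_ne_zero x).hasGradientAt)
    (hu.continuous.integrable_of_hasCompactSupport hc) (integrable_gradient hu hc)

lemma tendsto_integral_norm_gradient_cutoff_mul_mollify_sub (h : MemW11 N u v) :
    Tendsto (fun n => ∫ x, ‖gradient (fun y => cutoff n y * mollify volume n u y) x - v x‖) atTop
      (𝓝 0) := by
  obtain ⟨M, hM⟩ := exists_norm_fderiv_cutoff_le (E := Euc N)
  have hbound : ∀ n x, ‖gradient (fun y => cutoff n y * mollify volume n u y) x - v x‖ ≤
      ‖cutoff n x • mollify volume n v x - v x‖ +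
        ((n : ℝ) + 1)⁻¹ * M * ‖mollify volume n u x‖ := by
    intro n x
    rw [(hasGradientAt_mul ((contDiff_cutoff n).differentiable one_ne_zero x).hasGradientAt
      (h.hasGradientAt_mollify n x)).gradient, add_sub_right_comm]
    refine (norm_add_le _ _).trans ?_
    rw [norm_smul (mollify volume n u x), norm_gradient, mul_comm ‖mollify volume n u x‖]
    gcongr
    exact hM n x
  have hmain (n : ℕ) : Integrable fun x => ‖cutoff n x • mollify volume n v x - v x‖ :=
    ((integrable_cutoff_smul (integrable_mollify h.2.1 n) n).sub h.2.1).norm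
  have herror (n : ℕ) : Integrable fun x => ((n : ℝ) + 1)⁻¹ * M * ‖mollify volume n u x‖ :=
    (integrable_mollify h.1 n).norm.const_mul _
  have hM0 : 0 ≤ M := by simpa using (norm_nonneg _).trans (hM 0 0)
  have hscale : Tendsto (fun n : ℕ => ((n : ℝ) + 1)⁻¹ * M * ∫ x, ‖u x‖) atTop (𝓝 0) := by
    simpa using ((tendsto_one_div_add_atTop_nhds_zero_nat (𝕜 := ℝ)).mul_const M).mul_const
      (∫ x, ‖u x‖)
  refine squeeze_zero (fun n => integral_nonneg fun x => norm_nonneg _) (fun n => ?_)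
    (by simpa using (tendsto_integral_norm_cutoff_smul_mollify_sub h.2.1).add hscale)
  refine (integral_mono_of_nonneg (.of_forall fun x => norm_nonneg _)
    ((hmain n).add (herror n)) (.of_forall (hbound n))).trans ?_
  simp only [Pi.add_apply]
  rw [integral_add (hmain n) (herror n), integral_const_mul]
  exact add_le_add le_rfl
    (mul_le_mul_of_nonneg_left (integral_norm_mollify_le h.1 n) (by positivity))

lemma exists_approx (h : MemW11 N u v) : ∃ w : ℕ → Euc N → ℝ,
    (∀ n, ContDiff ℝ 1 (w n)) ∧ (∀ n, HasCompactSupport (w n)) ∧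
    (∀ᵐ x, Tendsto (fun n => w n x) atTop (𝓝 (u x))) ∧
    Tendsto (fun n => ∫ x, ‖w n x - u x‖) atTop (𝓝 0) ∧
    Tendsto (fun n => ∫ x, ‖gradient (w n) x - v x‖) atTop (𝓝 0) := by
  refine ⟨fun n x => cutoff n x * mollify volume n u x,
    fun n => (contDiff_cutoff n).mul (contDiff_mollify h.1.locallyIntegrable n),
    fun n => (hasCompactSupport_cutoff n).mul_right, ?_,
    tendsto_integral_norm_cutoff_smul_mollify_sub h.1,
    h.tendsto_integral_norm_gradient_cutoff_mul_mollify_sub⟩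
  filter_upwards [ae_tendsto_mollify h.1.locallyIntegrable] with x hx
  simpa using (tendsto_cutoff x).mul hx

end MemW11

section ChainRule

variable {Φ : ℝ → ℝ} {K : ℝ}

lemma abs_sub_le_of_abs_deriv_le (hΦ : Differentiable ℝ Φ) (hK : ∀ t, |deriv Φ t| ≤ K) (s t : ℝ) :
    |Φ s - Φ t| ≤ K * |s - t| :=
  Convex.norm_image_sub_le_of_norm_deriv_le (fun t _ => hΦ t)
    (fun t _ => hK t) convex_univ (Set.mem_univ t) (Set.mem_univ s)

variable {X : Type*} [MeasurableSpace X] {μ : Measure X}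

lemma integrable_comp_of_abs_deriv_le (hΦ : Differentiable ℝ Φ) (hK : ∀ t, |deriv Φ t| ≤ K)
    (hΦ0 : Φ 0 = 0) {u : X → ℝ} (hu : Integrable u μ) : Integrable (fun x => Φ (u x)) μ := by
  refine (hu.norm.const_mul K).mono' (hΦ.continuous.comp_aestronglyMeasurable hu.1)
    (.of_forall fun x => ?_)
  simpa [hΦ0] using abs_sub_le_of_abs_deriv_le hΦ hK (u x) 0

variable {F : Type*} [NormedAddCommGroup F] [NormedSpace ℝ F] {g : ℝ → ℝ}

lemma integrable_comp_smul (hg : Continuous g) (hK : ∀ t, |g t| ≤ K) {u : X → ℝ} {v : X → F}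
    (hu : Integrable u μ) (hv : Integrable v μ) : Integrable (fun x => g (u x) • v x) μ :=
  hv.bdd_smul K (hg.comp_aestronglyMeasurable hu.1) (.of_forall fun x => hK (u x))

lemma tendsto_integral_norm_comp_smul_sub (hg : Continuous g) (hK : ∀ t, |g t| ≤ K)
    {w : ℕ → X → ℝ} {u : X → ℝ} {z : ℕ → X → F} {v : X → F} (hw : ∀ n, Integrable (w n) μ)
    (hu : Integrable u μ) (hz : ∀ n, Integrable (z n) μ) (hv : Integrable v μ)
    (hwu : ∀ᵐ x ∂μ, Tendsto (fun n => w n x) atTop (𝓝 (u x)))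
    (hzv : Tendsto (fun n => ∫ x, ‖z n x - v x‖ ∂μ) atTop (𝓝 0)) :
    Tendsto (fun n => ∫ x, ‖g (w n x) • z n x - g (u x) • v x‖ ∂μ) atTop (𝓝 0) := by
  have hdiff (n : ℕ) : Integrable (fun x => g (w n x) • v x - g (u x) • v x) μ :=
    (integrable_comp_smul hg hK (hw n) hv).sub (integrable_comp_smul hg hK hu hv)
  have hfrozen : Tendsto (fun n => ∫ x, ‖g (w n x) • v x - g (u x) • v x‖ ∂μ) atTop
      (𝓝 (∫ _, (0 : ℝ) ∂μ)) := by
    refine tendsto_integral_of_dominated_convergence (fun x => 2 * K * ‖v x‖)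
      (fun n => (hdiff n).norm.1) (hv.norm.const_mul _) (fun n => .of_forall fun x => ?_) ?_
    · rw [norm_norm, ← sub_smul, norm_smul, Real.norm_eq_abs]
      gcongr
      linarith [abs_sub (g (w n x)) (g (u x)), hK (w n x), hK (u x)]
    · filter_upwards [hwu] with x hx
      simpa using (((hg.tendsto _).comp hx).smul_const (v x)).sub_const (g (u x) • v x) |>.norm
  have hbound : ∀ n x, ‖g (w n x) • z n x - g (u x) • v x‖ ≤
      K * ‖z n x - v x‖ + ‖g (w n x) • v x - g (u x) • v x‖ := fun n x => by
    rw [show g (w n x) • z n x - g (u x) • v x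
      = g (w n x) • (z n x - v x) + (g (w n x) • v x - g (u x) • v x) by rw [smul_sub]; abel]
    refine (norm_add_le _ _).trans ?_
    rw [norm_smul, Real.norm_eq_abs]
    gcongr
    exact hK _
  have hdist (n : ℕ) : Integrable (fun x => K * ‖z n x - v x‖) μ :=
    ((hz n).sub hv).norm.const_mul K
  refine squeeze_zero (fun n => integral_nonneg fun x => norm_nonneg _) (fun n => ?_)
    (by simpa using (hzv.const_mul K).add hfrozen)
  calc ∫ x, ‖g (w n x) • z n x - g (u x) • v x‖ ∂μ
      ≤ ∫ x, (K * ‖z n x - v x‖ + ‖g (w n x) • v x - g (u x) • v x‖) ∂μ :=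
        integral_mono_of_nonneg (.of_forall fun x => norm_nonneg _)
          ((hdist n).add (hdiff n).norm) (.of_forall (hbound n))
    _ = K * ∫ x, ‖z n x - v x‖ ∂μ + ∫ x, ‖g (w n x) • v x - g (u x) • v x‖ ∂μ := by
        rw [integral_add (hdist n) (hdiff n).norm, integral_const_mul]

lemma MemW11.comp {N : ℕ} {u : Euc N → ℝ} {v : Euc N → Euc N} (h : MemW11 N u v)
    (hΦ : ContDiff ℝ 1 Φ) (hK : ∀ t, |deriv Φ t| ≤ K) (hΦ0 : Φ 0 = 0) :
    MemW11 N (fun x => Φ (u x)) (fun x => deriv Φ (u x) • v x) := by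
  obtain ⟨w, hw, hwc, hwae, hwu, hwv⟩ := h.exists_approx
  have hdiff : Differentiable ℝ Φ := hΦ.differentiable one_ne_zero
  have hΦ' : Continuous (deriv Φ) := hΦ.continuous_deriv_one
  have hwint (n : ℕ) : Integrable (w n) := (hw n).continuous.integrable_of_hasCompactSupport (hwc n)
  have hgint (n : ℕ) : Integrable (gradient (w n)) := integrable_gradient (hw n) (hwc n)
  have hchain (n : ℕ) :
      MemW11 N (fun x => Φ (w n x)) (fun x => deriv Φ (w n x) • gradient (w n) x) :=
    of_hasGradientAt
      (fun x => hasGradientAt_comp (hdiff _).hasDerivAt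
        ((hw n).differentiable one_ne_zero x).hasGradientAt)
      (integrable_comp_of_abs_deriv_le hdiff hK hΦ0 (hwint n))
      (integrable_comp_smul hΦ' hK (hwint n) (hgint n))
  refine of_tendsto hchain (integrable_comp_of_abs_deriv_le hdiff hK hΦ0 h.1)
    (integrable_comp_smul hΦ' hK h.1 h.2.1) ?_
    (tendsto_integral_norm_comp_smul_sub hΦ' hK hwint h.1 hgint h.2.1 hwae hwv)
  refine squeeze_zero (fun n => integral_nonneg fun x => norm_nonneg _) (fun n => ?_)
    (by simpa using hwu.const_mul K)
  rw [← integral_const_mul]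
  exact integral_mono_of_nonneg (.of_forall fun x => norm_nonneg _)
    (((hwint n).sub h.1).norm.const_mul K)
    (.of_forall fun x => abs_sub_le_of_abs_deriv_le hdiff hK (w n x) (u x))

end ChainRule

section GagliardoNirenberg

variable {N : ℕ} {q E : ℝ} {u : Euc N → ℝ} {v : Euc N → Euc N}

lemma exists_eLpNorm_le_mul_eLpNorm_gradient (hN : 2 ≤ N) :
    ∃ C : NNReal, ∀ (u : Euc N → ℝ) (v : Euc N → Euc N), MemW11 N u v →
      eLpNorm u (ENNReal.ofReal ((N : ℝ) / ((N : ℝ) - 1))) volume ≤ C * eLpNorm v 1 volume := by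
  set p := ((N : ℝ) / ((N : ℝ) - 1)).toNNReal with hp
  have hN1 : (1 : ℝ) < N := by exact_mod_cast hN
  have hconj : NNReal.HolderConjugate (Module.finrank ℝ (Euc N)) p := by
    rw [← NNReal.holderConjugate_coe_iff, hp, Real.coe_toNNReal _ (by bound),
      finrank_euclideanSpace_fin]
    exact Real.HolderConjugate.conjExponent hN1
  refine ⟨eLpNormLESNormFDerivOneConst (volume : Measure (Euc N)) p, fun u v h => ?_⟩
  obtain ⟨w, hw, hwc, hwae, -, hwv⟩ := h.exists_approx
  set C := eLpNormLESNormFDerivOneConst (volume : Measure (Euc N)) p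
  have hbound (n : ℕ) : eLpNorm (w n) p volume ≤
      C * (ENNReal.ofReal (∫ x, ‖gradient (w n) x - v x‖) + eLpNorm v 1 volume) := by
    have hdist : Integrable (gradient (w n) - v) := (integrable_gradient (hw n) (hwc n)).sub h.2.1
    calc eLpNorm (w n) p volume ≤ C * eLpNorm (fderiv ℝ (w n)) 1 volume :=
          eLpNorm_le_eLpNorm_fderiv_one volume (hw n) (hwc n) hconj
      _ = C * eLpNorm (gradient (w n) - v + v) 1 volume := by
          rw [sub_add_cancel]
          congr 1
          exact eLpNorm_congr_norm_ae (.of_forall fun x => (norm_gradient (w n) x).symm)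
      _ ≤ C * (eLpNorm (gradient (w n) - v) 1 volume + eLpNorm v 1 volume) := by
          gcongr
          exact eLpNorm_add_le hdist.1 h.2.1.1 le_rfl
      _ = _ := by
          rw [eLpNorm_one_eq_lintegral_enorm (f := gradient (w n) - v),
            ← ofReal_integral_norm_eq_lintegral_enorm hdist]
          rfl
  have hlim : Tendsto (fun n => (C : ENNReal) *
      (ENNReal.ofReal (∫ x, ‖gradient (w n) x - v x‖) + eLpNorm v 1 volume)) atTop
      (𝓝 (C * eLpNorm v 1 volume)) := by
    refine ENNReal.Tendsto.const_mul ?_ (Or.inr ENNReal.coe_ne_top)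
    simpa using ((ENNReal.continuous_ofReal.tendsto 0).comp hwv).add_const (eLpNorm v 1 volume)
  calc eLpNorm u p volume ≤ liminf (fun n => eLpNorm (w n) p volume) atTop :=
        Lp.eLpNorm_lim_le_liminf_eLpNorm
          (fun n => (hw n).continuous.aestronglyMeasurable) u hwae
    _ ≤ C * eLpNorm v 1 volume := by
        rw [← hlim.liminf_eq]
        exact liminf_le_liminf (.of_forall hbound)

/-- The denominator `‖u‖_1^{q-(q-1)N} ‖v‖_1^{(q-1)N}` of the Gagliardo–Nirenberg ratio. -/
def gnDenom (N : ℕ) (q : ℝ) (u : Euc N → ℝ) (v : Euc N → Euc N) : ℝ :=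
  (∫ x, ‖u x‖) ^ (q - (q - 1) * N) * (∫ x, ‖v x‖) ^ ((q - 1) * (N : ℝ))

/-- The Gagliardo–Nirenberg inequality on `W^{1,1}(ℝ^N)` with constant `E`. Integrability of
`|u|^q` is included, since otherwise the Bochner integral would be zero. -/
def GNInequality (N : ℕ) (q E : ℝ) : Prop :=
  ∀ (u : Euc N → ℝ) (v : Euc N → Euc N), MemW11 N u v →
    Integrable (fun x => |u x| ^ q) ∧ ∫ x, |u x| ^ q ≤ E * gnDenom N q u v

lemma gnDenom_nonneg : 0 ≤ gnDenom N q u v := by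
  unfold gnDenom
  positivity

lemma gn_exponent_nonneg (hN : 2 ≤ N) (hq : q ≤ (N : ℝ) / ((N : ℝ) - 1)) :
    0 ≤ q - (q - 1) * N := by
  have hN1 : (1 : ℝ) < N := by exact_mod_cast hN
  rw [le_div_iff₀ (sub_pos.2 hN1)] at hq
  linarith

lemma toReal_eLpNorm_one_eq_integral {X F : Type*} [MeasurableSpace X] {μ : Measure X}
    [NormedAddCommGroup F] {f : X → F} (hf : Integrable f μ) :
    (eLpNorm f 1 μ).toReal = ∫ x, ‖f x‖ ∂μ := by
  rw [toReal_eLpNorm hf.1, lpNorm_one_eq_integral_norm hf.1]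

lemma nrmq_rpow_eq_integral (hq : 0 < q) (hu : AEStronglyMeasurable u) :
    nrmq N q u ^ q = ∫ x, |u x| ^ q := by
  rw [nrmq, toReal_eLpNorm hu, lpNorm_eq_integral_norm_rpow_toReal (by simpa using hq)
    ENNReal.ofReal_ne_top hu, ENNReal.toReal_ofReal hq.le]
  exact Real.rpow_inv_rpow (by positivity) hq.ne'

lemma ratioQW_eq_integral_div (hq : 0 < q) (h : MemW11 N u v) :
    ratioQW N q u v = (∫ x, |u x| ^ q) / gnDenom N q u v := by
  rw [ratioQW, nrmq_rpow_eq_integral hq h.1.1, nrm1, toReal_eLpNorm_one_eq_integral h.1,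
    toReal_eLpNorm_one_eq_integral h.2.1, gnDenom]

lemma eLpNorm_rpow_le_sobolev_interpolation (hN : 2 ≤ N) (hq1 : 1 < q)
    (hq2 : q ≤ (N : ℝ) / ((N : ℝ) - 1)) (hu : AEStronglyMeasurable u) :
    eLpNorm u (ENNReal.ofReal q) volume ^ q ≤ eLpNorm u 1 volume ^ (q - (q - 1) * N) *
      eLpNorm u (ENNReal.ofReal ((N : ℝ) / ((N : ℝ) - 1))) volume ^ ((q - 1) * (N : ℝ)) := by
  have hN1 : 0 < (N : ℝ) - 1 := sub_pos.2 (by exact_mod_cast hN)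
  have hb : (q - 1) * ((N : ℝ) - 1) * ((N : ℝ) / ((N : ℝ) - 1)) = (q - 1) * N := by field_simp
  simpa only [hb] using eLpNorm_rpow_le_eLpNorm_rpow_mul_eLpNorm_rpow hu
    (p := (N : ℝ) / ((N : ℝ) - 1)) (b := (q - 1) * ((N : ℝ) - 1)) (by bound) (by linarith)
    (gn_exponent_nonneg hN hq2) (by bound) (by ring) (by rw [hb]; ring)

lemma exists_gnInequality (hN : 2 ≤ N) (hq1 : 1 < q) (hq2 : q ≤ (N : ℝ) / ((N : ℝ) - 1)) :
    ∃ C : NNReal, GNInequality N q C := by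
  obtain ⟨C, hC⟩ := exists_eLpNorm_le_mul_eLpNorm_gradient hN
  have hq0 : 0 < q := by linarith
  refine ⟨C ^ ((q - 1) * (N : ℝ)), fun u v h => ?_⟩
  have hβ : 0 ≤ (q - 1) * (N : ℝ) := by bound
  have hle : eLpNorm u (ENNReal.ofReal q) volume ^ q ≤ eLpNorm u 1 volume ^ (q - (q - 1) * N) *
      (C * eLpNorm v 1 volume) ^ ((q - 1) * (N : ℝ)) :=
    (eLpNorm_rpow_le_sobolev_interpolation hN hq1 hq2 h.1.1).trans (by gcongr; exact hC u v h)
  have hfin : eLpNorm u 1 volume ^ (q - (q - 1) * N) *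
      (C * eLpNorm v 1 volume) ^ ((q - 1) * (N : ℝ)) ≠ ⊤ := by
    have hu := (memLp_one_iff_integrable.2 h.1).eLpNorm_ne_top
    have hv := (memLp_one_iff_integrable.2 h.2.1).eLpNorm_ne_top
    exact ENNReal.mul_ne_top (ENNReal.rpow_ne_top_of_nonneg (gn_exponent_nonneg hN hq2) hu)
      (ENNReal.rpow_ne_top_of_nonneg hβ (ENNReal.mul_ne_top ENNReal.coe_ne_top hv))
  have hmem : MemLp u (ENNReal.ofReal q) :=
    ⟨h.1.1, (ENNReal.rpow_lt_top_iff_of_pos hq0).1 (hle.trans_lt hfin.lt_top)⟩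
  have hint : Integrable (fun x => |u x| ^ q) := by
    simpa [hq0.le] using hmem.integrable_norm_rpow (by simpa using hq0) ENNReal.ofReal_ne_top
  refine ⟨hint, ?_⟩
  calc ∫ x, |u x| ^ q = (eLpNorm u (ENNReal.ofReal q) volume ^ q).toReal := by
        rw [← nrmq_rpow_eq_integral hq0 h.1.1, nrmq, ENNReal.toReal_rpow]
    _ ≤ _ := ENNReal.toReal_mono hfin hle
    _ = (C ^ ((q - 1) * (N : ℝ)) : NNReal) * gnDenom N q u v := by
        rw [ENNReal.toReal_mul, ← ENNReal.toReal_rpow, ← ENNReal.toReal_rpow, ENNReal.toReal_mul,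
          toReal_eLpNorm_one_eq_integral h.1, toReal_eLpNorm_one_eq_integral h.2.1,
          Real.mul_rpow (by simp) (integral_nonneg fun _ => norm_nonneg _), gnDenom]
        push_cast
        simp only [ENNReal.coe_toReal]
        ring

lemma GNInequality.ratioQW_le (hE : GNInequality N q E) (hE0 : 0 ≤ E) (hq : 0 < q)
    (h : MemW11 N u v) : ratioQW N q u v ≤ E := by
  rw [ratioQW_eq_integral_div hq h]
  exact div_le_of_le_mul₀ gnDenom_nonneg hE0 (hE u v h).2

lemma bddAbove_ratioQW (hN : 2 ≤ N) (hq1 : 1 < q) (hq2 : q ≤ (N : ℝ) / ((N : ℝ) - 1)) :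
    BddAbove {r | ∃ u v, MemW11 N u v ∧ u ≠ 0 ∧ r = ratioQW N q u v} := by
  obtain ⟨C, hC⟩ := exists_gnInequality hN hq1 hq2
  refine ⟨C, ?_⟩
  rintro r ⟨u, v, h, -, rfl⟩
  exact hC.ratioQW_le C.2 (by linarith) h

lemma GNInequality.gnDenom_pos (hE : GNInequality N q E) (h : MemW11 N u v)
    (hpos : 0 < ∫ x, |u x| ^ q) : 0 < gnDenom N q u v := by
  refine gnDenom_nonneg.lt_of_ne' fun hzero => hpos.not_ge ?_
  simpa [hzero] using (hE u v h).2

lemma EqSupW_pos (hN : 2 ≤ N) (hq1 : 1 < q) (hq2 : q ≤ (N : ℝ) / ((N : ℝ) - 1)) :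
    0 < EqSupW N q := by
  have hq0 : 0 < q := by linarith
  obtain ⟨C, hC⟩ := exists_gnInequality hN hq1 hq2
  have hzero : unitBump (Euc N) 0 ≠ 0 :=
    ((unitBump (Euc N)).pos_of_mem_ball (by simp [unitBump])).ne'
  have hbump : MemW11 N (unitBump (Euc N)) (gradient (unitBump (Euc N))) :=
    .of_contDiff (unitBump (Euc N)).contDiff (unitBump (Euc N)).hasCompactSupport
  have hpos : 0 < ∫ x, |unitBump (Euc N) x| ^ q :=
    integral_pos_of_integrable_nonneg_nonzero (x := 0)
      ((unitBump (Euc N)).continuous.abs.rpow_const fun _ => Or.inr hq0.le) (hC _ _ hbump).1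
      (fun x => by positivity) (by positivity)
  have hratio : 0 < ratioQW N q (unitBump (Euc N)) (gradient (unitBump (Euc N))) := by
    rw [ratioQW_eq_integral_div hq0 hbump]
    exact div_pos hpos (hC.gnDenom_pos hbump hpos)
  exact hratio.trans_le (le_csSup (bddAbove_ratioQW hN hq1 hq2)
    ⟨_, _, hbump, fun h => hzero (congr_fun h 0), rfl⟩)

lemma gnInequality_EqSupW (hN : 2 ≤ N) (hq1 : 1 < q) (hq2 : q ≤ (N : ℝ) / ((N : ℝ) - 1)) :
    GNInequality N q (EqSupW N q) := by
  have hq0 : 0 < q := by linarith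
  obtain ⟨C, hC⟩ := exists_gnInequality hN hq1 hq2
  refine fun u v h => ⟨(hC u v h).1, ?_⟩
  have hnonneg : 0 ≤ ∫ x, |u x| ^ q := by positivity
  rcases hnonneg.eq_or_lt with hzero | hpos
  · rw [← hzero]
    exact mul_nonneg (EqSupW_pos hN hq1 hq2).le gnDenom_nonneg
  have hu : u ≠ 0 := by
    rintro rfl
    simp [Real.zero_rpow hq0.ne'] at hpos
  rw [← div_le_iff₀ (hC.gnDenom_pos h hpos), ← ratioQW_eq_integral_div hq0 h]
  exact le_csSup (bddAbove_ratioQW hN hq1 hq2) ⟨u, v, h, hu, rfl⟩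

end GagliardoNirenberg

section Extremals

variable {N : ℕ} {q E : ℝ} {u u₁ u₂ : Euc N → ℝ} {v v₁ v₂ : Euc N → Euc N}

/-- `u`, with weak gradient `v`, attains equality in the Gagliardo–Nirenberg inequality with
constant `E`, without both sides being zero. -/
structure IsGNExtremal (N : ℕ) (q E : ℝ) (u : Euc N → ℝ) (v : Euc N → Euc N) : Prop where
  memW11 : MemW11 N u v
  integral_eq : ∫ x, |u x| ^ q = E * gnDenom N q u v
  integral_pos : 0 < ∫ x, |u x| ^ q

lemma isGNExtremal_of_ratioQW_eq (hE : 0 < E) (hq : 0 < q) (h : MemW11 N u v)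
    (hratio : ratioQW N q u v = E) : IsGNExtremal N q E u v := by
  rw [ratioQW_eq_integral_div hq h] at hratio
  have hdenom : gnDenom N q u v ≠ 0 := fun hzero => hE.ne (by simpa [hzero] using hratio)
  have heq : ∫ x, |u x| ^ q = E * gnDenom N q u v := (div_eq_iff hdenom).1 hratio
  exact ⟨h, heq, heq ▸ mul_pos hE (gnDenom_nonneg.lt_of_ne' hdenom)⟩

namespace IsGNExtremal

lemma not_ae_eq_zero (h : IsGNExtremal N q E u v) (hq : q ≠ 0) : ¬ u =ᵐ[volume] 0 := by
  refine fun hu => h.integral_pos.ne' (integral_eq_zero_of_ae ?_)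
  filter_upwards [hu] with x hx
  simp [hx, Real.zero_rpow hq]

lemma gradient_not_ae_eq_zero (h : IsGNExtremal N q E u v) (hβ : (q - 1) * (N : ℝ) ≠ 0) :
    ¬ v =ᵐ[volume] 0 := by
  intro hv
  have hzero : ∫ x, ‖v x‖ = 0 := integral_eq_zero_of_ae (by
    filter_upwards [hv] with x hx
    simp [hx])
  simpa [h.integral_eq, gnDenom, hzero, Real.zero_rpow hβ] using h.integral_pos

lemma integral_norm_pos (h : IsGNExtremal N q E u v) (hq : q ≠ 0) : 0 < ∫ x, ‖u x‖ := by
  refine (integral_nonneg fun _ => norm_nonneg _).lt_of_ne' fun hzero => h.not_ae_eq_zero hq ?_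
  filter_upwards [(integral_eq_zero_iff_of_nonneg (fun _ => norm_nonneg _) h.memW11.1.norm).1 hzero]
    with x hx
  exact norm_eq_zero.1 hx

lemma integral_norm_gradient_pos (h : IsGNExtremal N q E u v) (hβ : (q - 1) * (N : ℝ) ≠ 0) :
    0 < ∫ x, ‖v x‖ := by
  refine (integral_nonneg fun _ => norm_nonneg _).lt_of_ne'
    fun hzero => h.gradient_not_ae_eq_zero hβ ?_
  filter_upwards [(integral_eq_zero_iff_of_nonneg (fun _ => norm_nonneg _)
    h.memW11.2.1.norm).1 hzero] with x hx
  exact norm_eq_zero.1 hx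

lemma integral_rpow_le_of_integral_eq_mul (h : IsGNExtremal N q E u v)
    (hGN : GNInequality N q E) (hq : 0 < q) (hα : 0 ≤ q - (q - 1) * N)
    (hβ : 0 ≤ (q - 1) * (N : ℝ)) (h₁ : MemW11 N u₁ v₁) {a b : ℝ} (ha : 0 ≤ a) (hb : 0 ≤ b)
    (hu : ∫ x, ‖u₁ x‖ = a * ∫ x, ‖u x‖) (hv : ∫ x, ‖v₁ x‖ = b * ∫ x, ‖v x‖) :
    ∫ x, |u₁ x| ^ q ≤
      (((q - (q - 1) * N) * a + (q - 1) * N * b) / q) ^ q * ∫ x, |u x| ^ q := by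
  have hsum : q - (q - 1) * N + (q - 1) * N = q := sub_add_cancel _ _
  have hmean := rpow_mul_rpow_le_arith_mean_rpow ha hb hα hβ (by rwa [hsum])
  rw [hsum] at hmean
  calc ∫ x, |u₁ x| ^ q ≤ E * gnDenom N q u₁ v₁ := (hGN u₁ v₁ h₁).2
    _ = a ^ (q - (q - 1) * N) * b ^ ((q - 1) * (N : ℝ)) * ∫ x, |u x| ^ q := by
        rw [h.integral_eq, gnDenom, gnDenom, hu, hv,
          Real.mul_rpow ha (integral_nonneg fun _ => norm_nonneg _),
          Real.mul_rpow hb (integral_nonneg fun _ => norm_nonneg _)]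
        ring
    _ ≤ _ := mul_le_mul_of_nonneg_right hmean h.integral_pos.le

/-- The sharp inequality for both pieces and the AM-GM inequality bound the `L^q` norms of `u₁`
and `u₂` by `l` and `1 - l` times that of `u`, which forces equality in Minkowski's inequality. -/
lemma exists_ae_abs_eq_mul_of_split (h : IsGNExtremal N q E u v) (hGN : GNInequality N q E)
    (hq : 1 < q) (hN : 0 < N) (hα : 0 ≤ q - (q - 1) * N) (h₁ : MemW11 N u₁ v₁)
    (h₂ : MemW11 N u₂ v₂) (hu : ∀ x, |u₁ x| + |u₂ x| = |u x|)
    (hv : ∀ x, ‖v₁ x‖ + ‖v₂ x‖ = ‖v x‖) : ∃ l, ∀ᵐ x, |u₁ x| = l * |u x| := by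
  have hq0 : 0 < q := one_pos.trans hq
  have hβ : 0 < (q - 1) * (N : ℝ) := mul_pos (sub_pos.2 hq) (by exact_mod_cast hN)
  obtain ⟨a₁, a₂, ha₁, ha₂, ha, hu₁, hu₂⟩ :=
    exists_weights_integral_norm h₁.1 h₂.1 hu (h.integral_norm_pos hq0.ne')
  obtain ⟨b₁, b₂, hb₁, hb₂, hb, hv₁, hv₂⟩ :=
    exists_weights_integral_norm h₁.2.1 h₂.2.1 hv (h.integral_norm_gradient_pos hβ.ne')
  have hle₁ := h.integral_rpow_le_of_integral_eq_mul hGN hq0 hα hβ.le h₁ ha₁ hb₁ hu₁ hv₁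
  have hle₂ := h.integral_rpow_le_of_integral_eq_mul hGN hq0 hα hβ.le h₂ ha₂ hb₂ hu₂ hv₂
  set l₁ := ((q - (q - 1) * N) * a₁ + (q - 1) * N * b₁) / q with hl₁
  set l₂ := ((q - (q - 1) * N) * a₂ + (q - 1) * N * b₂) / q with hl₂
  have hl : l₁ + l₂ = 1 := by
    rw [hl₁, hl₂, ← add_div, div_eq_one_iff_eq hq0.ne']
    linear_combination (q - (q - 1) * N) * ha + (q - 1) * N * hb
  have hint : Integrable fun x => (|u₁ x| + |u₂ x|) ^ q := by
    simpa only [hu] using (hGN _ _ h.memW11).1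
  refine ⟨l₁, ?_⟩
  simpa only [hu] using ae_eq_mul_add_of_integral_rpow_le hq (fun _ => abs_nonneg _)
    (fun _ => abs_nonneg _) (hGN _ _ h₁).1 (hGN _ _ h₂).1 hint (by positivity) (by positivity) hl
    (by simpa only [hu] using hle₁) (by simpa only [hu] using hle₂)

end IsGNExtremal

end Extremals

section Squash

/-- The nonlinearity `t / √(1 + t²)` used to split extremals. Its derivative `(1 + t²)^(-3/2)` lies
in `(0, 1]`, so that both `squash` and `t - squash t` are nondecreasing. -/
def squash (t : ℝ) : ℝ := Real.sin (Real.arctan t)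

lemma squash_zero : squash 0 = 0 := by simp [squash]

lemma squash_eq_mul_cos_arctan (t : ℝ) : squash t = Real.cos (Real.arctan t) * t := by
  rw [squash, Real.sin_arctan, Real.cos_arctan]
  ring

lemma contDiff_squash : ContDiff ℝ 1 squash := Real.contDiff_sin.comp Real.contDiff_arctan

lemma hasDerivAt_squash (t : ℝ) : HasDerivAt squash (Real.cos (Real.arctan t) ^ 3) t := by
  have hcos : Real.cos (Real.arctan t) * (1 / (1 + t ^ 2)) = Real.cos (Real.arctan t) ^ 3 := by
    rw [← Real.cos_sq_arctan]
    ring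
  exact hcos ▸ (Real.hasDerivAt_arctan t).sin

lemma hasDerivAt_sub_squash (t : ℝ) :
    HasDerivAt (fun t => t - squash t) (1 - Real.cos (Real.arctan t) ^ 3) t :=
  (hasDerivAt_id t).sub (hasDerivAt_squash t)

lemma cos_arctan_pow_three_mem_Icc (t : ℝ) : Real.cos (Real.arctan t) ^ 3 ∈ Set.Icc (0 : ℝ) 1 :=
  ⟨by have := Real.cos_arctan_pos t; positivity,
    pow_le_one₀ (Real.cos_arctan_pos t).le (Real.cos_le_one _)⟩

lemma norm_smul_add_norm_one_sub_smul {F : Type*} [NormedAddCommGroup F] [NormedSpace ℝ F] {c : ℝ}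
    (hc : c ∈ Set.Icc (0 : ℝ) 1) (w : F) : ‖c • w‖ + ‖(1 - c) • w‖ = ‖w‖ := by
  rw [norm_smul, norm_smul, Real.norm_of_nonneg hc.1, Real.norm_of_nonneg (sub_nonneg.2 hc.2)]
  ring

lemma abs_squash_add_abs_sub_squash (t : ℝ) : |squash t| + |t - squash t| = |t| := by
  have hcos : Real.cos (Real.arctan t) ∈ Set.Icc (0 : ℝ) 1 :=
    ⟨(Real.cos_arctan_pos t).le, Real.cos_le_one _⟩
  simpa only [squash_eq_mul_cos_arctan, smul_eq_mul, Real.norm_eq_abs, sub_mul, one_mul] using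
    norm_smul_add_norm_one_sub_smul hcos t

lemma squash_eq_of_abs_squash_eq {t l : ℝ} (h : |squash t| = l * |t|) : squash t = l * t := by
  rw [squash_eq_mul_cos_arctan] at h ⊢
  rw [abs_mul, abs_of_pos (Real.cos_arctan_pos t)] at h
  rcases eq_or_ne t 0 with rfl | ht
  · simp
  · rw [mul_right_cancel₀ (abs_ne_zero.2 ht) h]

lemma eq_one_of_squash_eq_mul {t l : ℝ} (h : squash t = l * t)
    (hderiv : Real.cos (Real.arctan t) ^ 3 = l) : l = 1 := by
  rcases eq_or_ne t 0 with rfl | ht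
  · simp [← hderiv]
  have hl : Real.cos (Real.arctan t) = l :=
    mul_right_cancel₀ ht (squash_eq_mul_cos_arctan t ▸ h)
  have hpos : 0 < l := hl ▸ Real.cos_arctan_pos t
  rw [hl] at hderiv
  exact (pow_eq_one_iff_of_nonneg hpos.le two_ne_zero).1
    (mul_right_cancel₀ hpos.ne' (by linear_combination hderiv))

lemma eq_zero_of_squash_eq_self {t : ℝ} (h : squash t = t) : t = 0 := by
  by_contra ht
  have hcos : Real.cos (Real.arctan t) = 1 :=
    mul_right_cancel₀ ht (by rw [← squash_eq_mul_cos_arctan, h, one_mul])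
  have hsq := Real.cos_sq_arctan t
  rw [hcos] at hsq
  have : t ^ 2 = 0 := by field_simp at hsq; linarith
  exact ht (pow_eq_zero_iff two_ne_zero |>.1 this)

namespace MemW11

variable {N : ℕ} {u : Euc N → ℝ} {v : Euc N → Euc N}

lemma comp_squash (h : MemW11 N u v) :
    MemW11 N (fun x => squash (u x)) (fun x => Real.cos (Real.arctan (u x)) ^ 3 • v x) := by
  have hderiv (t : ℝ) : deriv squash t = Real.cos (Real.arctan t) ^ 3 := (hasDerivAt_squash t).deriv
  have hbound (t : ℝ) : |deriv squash t| ≤ 1 := by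
    have hmem := cos_arctan_pow_three_mem_Icc t
    rw [hderiv, abs_of_nonneg hmem.1]
    exact hmem.2
  simpa only [hderiv] using h.comp contDiff_squash hbound squash_zero

lemma comp_sub_squash (h : MemW11 N u v) :
    MemW11 N (fun x => u x - squash (u x))
      (fun x => (1 - Real.cos (Real.arctan (u x)) ^ 3) • v x) := by
  have hderiv (t : ℝ) : deriv (fun t => t - squash t) t = 1 - Real.cos (Real.arctan t) ^ 3 :=
    (hasDerivAt_sub_squash t).deriv
  have hbound (t : ℝ) : |deriv (fun t => t - squash t) t| ≤ 1 := by
    have hmem := cos_arctan_pow_three_mem_Icc t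
    rw [hderiv, abs_of_nonneg (sub_nonneg.2 hmem.2)]
    exact sub_le_self 1 hmem.1
  simpa only [hderiv] using
    h.comp (contDiff_fun_id.sub contDiff_squash) hbound (by simp [squash_zero])

/-- Where `∇u ≠ 0`, differentiating `squash u = l * u` shows that `l` is both the slope of the
secant from the origin and of the tangent of `squash` at `u`, which leaves only `l = 1`. -/
lemma ae_eq_zero_or_gradient_ae_eq_zero_of_squash (h : MemW11 N u v) {l : ℝ}
    (hl : ∀ᵐ x, squash (u x) = l * u x) : u =ᵐ[volume] 0 ∨ v =ᵐ[volume] 0 := by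
  rcases eq_or_ne l 1 with rfl | hl1
  · left
    filter_upwards [hl] with x hx
    exact eq_zero_of_squash_eq_self (by simpa using hx)
  right
  have hlin : MemW11 N (fun x => l * u x) (fun x => l • v x) := by
    simpa using h.comp (Φ := fun t => l * t) (by fun_prop) (K := |l|) (by simp) (by simp)
  filter_upwards [hl, h.comp_squash.gradient_ae_unique hlin hl] with x hx hgrad
  by_contra hv
  exact hl1 (eq_one_of_squash_eq_mul hx (smul_left_injective ℝ hv hgrad))

end MemW11

end Squash

/-- `Ẽ_q` is not attained by any nonzero `u ∈ W^{1,1}(ℝ^N)`. -/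
theorem EqW_not_attained (N : ℕ) (hN : 2 ≤ N) (q : ℝ) (hq1 : 1 < q)
    (hq2 : q ≤ (N : ℝ) / ((N : ℝ) - 1)) :
    ¬ ∃ u : Euc N → ℝ, ∃ v : Euc N → Euc N,
        MemW11 N u v ∧ u ≠ 0 ∧ ratioQW N q u v = EqSupW N q := by
  rintro ⟨u, v, h, -, hmax⟩
  have hq0 : 0 < q := one_pos.trans hq1
  have hN0 : 0 < N := two_pos.trans_le hN
  have hβ : (q - 1) * (N : ℝ) ≠ 0 := by have := sub_pos.2 hq1; positivity
  have hext : IsGNExtremal N q (EqSupW N q) u v :=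
    isGNExtremal_of_ratioQW_eq (EqSupW_pos hN hq1 hq2) hq0 h hmax
  obtain ⟨l, hl⟩ := hext.exists_ae_abs_eq_mul_of_split (gnInequality_EqSupW hN hq1 hq2) hq1 hN0
    (gn_exponent_nonneg hN hq2) h.comp_squash h.comp_sub_squash
    (fun x => abs_squash_add_abs_sub_squash (u x))
    (fun x => norm_smul_add_norm_one_sub_smul (cos_arctan_pow_three_mem_Icc (u x)) (v x))
  have hsquash : ∀ᵐ x, squash (u x) = l * u x := hl.mono fun x => squash_eq_of_abs_squash_eq
  rcases h.ae_eq_zero_or_gradient_ae_eq_zero_of_squash hsquash with hu | hv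
  · exact hext.not_ae_eq_zero hq0.ne' hu
  · exact hext.gradient_not_ae_eq_zero hβ hv
end
end
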